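/- Let R be a henselian Noetherian local ring whose 𝔪-adic completion is isomorphic to Q/(f₁, …, f_c) for some regular local ring Q and some Q-regular sequence f₁, …, f_c (i.e. R is a henselian local complete intersection). Let 𝒳 be a resolving subcategory of the category of finitely generated R-modules all of whose members are maximal Cohen–Macaulay, and let M be a finitely generated R-module. If M admits a right 𝒳-approximation (equivalently, the functor Hom_R(−, M)|_𝒳 is finitely generated), then M ∈ 𝒞(𝒳) (equivalently, Hom_R(−, M)|_𝒳 is finitely presented); in other words, 𝒳 is coherent. -/

import Mathlib

open CategoryTheory IsLocalRing

universe u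

noncomputable section

/-- The `i`-th Ext module of two `R`-modules. -/
abbrev ExtMod (R : Type u) [CommRing R] (i : ℕ) (M N : ModuleCat.{u} R) : ModuleCat R :=
  ((Ext R (ModuleCat.{u} R) i).obj (Opposite.op M)).obj N

/-- Vanishing of the `i`-th Ext module: `Ext_R^i(M, N) = 0`. -/
def ExtVanish (R : Type u) [CommRing R] (i : ℕ) (M N : ModuleCat.{u} R) : Prop :=
  Subsingleton (ExtMod R i M N)

variable (R : Type u) [CommRing R]

/-- `0 → A → B → C → 0` is a short exact sequence. -/
def IsSES {A B C : ModuleCat.{u} R} (f : A →ₗ[R] B) (g : B →ₗ[R] C) : Prop :=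
  Function.Injective f ∧ Function.Exact f g ∧ Function.Surjective g

/-- A resolving subcategory of the category of finitely generated `R`-modules. -/
structure IsResolving (𝒳 : Set (ModuleCat.{u} R)) : Prop where
  finite : ∀ M ∈ 𝒳, Module.Finite R M
  isoClosed : ∀ {M N : ModuleCat.{u} R}, M ∈ 𝒳 → (↥M ≃ₗ[R] ↥N) → N ∈ 𝒳
  freeMem : ∀ M : ModuleCat.{u} R, Module.Finite R M → Module.Free R M → M ∈ 𝒳
  summandClosed : ∀ M N : ModuleCat.{u} R, ModuleCat.of R (↥M × ↥N) ∈ 𝒳 → M ∈ 𝒳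
  extClosed : ∀ (A B C : ModuleCat.{u} R) (f : A →ₗ[R] B) (g : B →ₗ[R] C),
    IsSES R f g → A ∈ 𝒳 → C ∈ 𝒳 → B ∈ 𝒳
  kerClosed : ∀ (A B C : ModuleCat.{u} R) (f : A →ₗ[R] B) (g : B →ₗ[R] C),
    IsSES R f g → B ∈ 𝒳 → C ∈ 𝒳 → A ∈ 𝒳

/-- `f : X → M` is a right `𝒳`-approximation of `M`. -/
def IsRightApprox (𝒳 : Set (ModuleCat.{u} R)) {X M : ModuleCat.{u} R} (f : X →ₗ[R] M) : Prop :=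
  X ∈ 𝒳 ∧ ∀ W ∈ 𝒳, ∀ g : ↥W →ₗ[R] ↥M, ∃ h : ↥W →ₗ[R] ↥X, f ∘ₗ h = g

/-- `M` admits a right `𝒳`-approximation. -/
def HasRightApprox (𝒳 : Set (ModuleCat.{u} R)) (M : ModuleCat.{u} R) : Prop :=
  ∃ (X : ModuleCat.{u} R) (f : X →ₗ[R] M), IsRightApprox R 𝒳 f

/-- `𝒳` is contravariantly infinite: no finitely generated module outside `𝒳` admits
a right `𝒳`-approximation. -/
def ContravariantlyInfinite (𝒳 : Set (ModuleCat.{u} R)) : Prop :=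
  ∀ M : ModuleCat.{u} R, Module.Finite R M → M ∉ 𝒳 → ¬ HasRightApprox R 𝒳 M

/-- `𝒳` is contravariantly finite: every finitely generated module admits
a right `𝒳`-approximation. -/
def ContravariantlyFinite (𝒳 : Set (ModuleCat.{u} R)) : Prop :=
  ∀ M : ModuleCat.{u} R, Module.Finite R M → HasRightApprox R 𝒳 M

/-- The restricted functor `Hom_R(-, C)|_𝒳` is finitely presented, i.e. `C ∈ 𝒞(𝒳)`. -/
def MemCC (𝒳 : Set (ModuleCat.{u} R)) (C : ModuleCat.{u} R) : Prop :=
  ∃ (X₀ X₁ : ModuleCat.{u} R) (g : ↥X₁ →ₗ[R] ↥X₀) (f : ↥X₀ →ₗ[R] ↥C), X₀ ∈ 𝒳 ∧ X₁ ∈ 𝒳 ∧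
    ∀ W ∈ 𝒳, Function.Surjective (fun h : ↥W →ₗ[R] ↥X₀ => f ∘ₗ h) ∧
      Function.Exact (fun h : ↥W →ₗ[R] ↥X₁ => g ∘ₗ h) (fun h : ↥W →ₗ[R] ↥X₀ => f ∘ₗ h)

/-- `𝒳` is coherent: `𝒞(𝒳) = rap 𝒳`. -/
def Coherent (𝒳 : Set (ModuleCat.{u} R)) : Prop :=
  ∀ M : ModuleCat.{u} R, Module.Finite R M → (MemCC R 𝒳 M ↔ HasRightApprox R 𝒳 M)

/-- The right Ext-orthogonal class `𝒳^⊥` of a class `𝒳` of finitely generated modules. -/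
def XPerp (𝒳 : Set (ModuleCat.{u} R)) : Set (ModuleCat.{u} R) :=
  {Y | Module.Finite R Y ∧ ∀ X ∈ 𝒳, ∀ i, 0 < i → ExtVanish R i X Y}

/-- The projective dimension of `M` is at most `n`. -/
def ProjDimLE (M : ModuleCat.{u} R) (n : ℕ) : Prop :=
  ∀ N : ModuleCat.{u} R, ∀ i, n < i → ExtVanish R i M N

/-- The depth of an `R`-module over a local ring: `inf { i | Ext^i(k, M) ≠ 0 }`. -/
def moduleDepth [IsLocalRing R] (M : ModuleCat.{u} R) : ℕ∞ :=
  sInf ((fun i : ℕ => (i : ℕ∞)) ''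
    {i : ℕ | ¬ ExtVanish R i (ModuleCat.of R (ResidueField R)) M})

/-- `M` is a maximal Cohen–Macaulay `R`-module: `depth M ≥ dim R`. -/
def IsMCM [IsLocalRing R] (M : ModuleCat.{u} R) : Prop :=
  ringKrullDim R ≤ (moduleDepth R M : WithBot ℕ∞)

/-- A Gorenstein local ring: `∃ n, Ext^i(M, R) = 0` for every finitely generated `M`
and every `i > n`. -/
def IsGorensteinLocalRing : Prop :=
  ∃ n : ℕ, ∀ M : ModuleCat.{u} R, Module.Finite R M →
    ∀ i, n < i → ExtVanish R i M (ModuleCat.of R R)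

/-- A regular local ring: Noetherian local with `dim R = dim_k 𝔪/𝔪²`. -/
def IsRegularLocal [IsLocalRing R] : Prop :=
  IsNoetherianRing R ∧
    ringKrullDim R = (Module.finrank (ResidueField R) (CotangentSpace R) : ℕ)

/-- Witness that the local ring `R` is a complete intersection: its `𝔪`-adic completion
is `Q/(f₁, …, f_c)` for a regular local ring `Q` and a `Q`-regular sequence `f₁, …, f_c`. -/
structure CompleteIntersectionWitness [IsLocalRing R] : Type (u + 1) where
  Q : Type u
  [commRing : CommRing Q]
  [localRing : IsLocalRing Q]
  regular : IsRegularLocal Q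
  fs : List Q
  regSeq : RingTheory.Sequence.IsRegular Q fs
  equiv : AdicCompletion (maximalIdeal R) R ≃+* Q ⧸ Ideal.span {x : Q | x ∈ fs}

/-- The local ring `R` is a complete intersection. -/
def IsCompleteIntersection [IsLocalRing R] : Prop :=
  Nonempty (CompleteIntersectionWitness R)

end

section PartA
open Polynomial

theorem etale_section (R : Type u) [CommRing R] [HenselianLocalRing R]
    (A : Type u) [CommRing A] [Algebra R A] [Algebra.Etale R A]
    (ψ : A →ₐ[R] ResidueField R) :
    ∃ σ : A →ₐ[R] R, (Algebra.ofId R (ResidueField R)).comp σ = ψ := by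
  have hprime : (RingHom.ker ψ.toRingHom).IsPrime := RingHom.ker_isPrime _
  obtain ⟨h, hh, hst⟩ := Algebra.IsEtaleAt.exists_isStandardEtale (R := R) (RingHom.ker ψ.toRingHom)
  have hu : IsUnit (ψ h) := by
    rw [isUnit_iff_ne_zero]; exact fun h0 => hh h0
  let ψ' : Localization.Away h →ₐ[R] ResidueField R :=
    IsLocalization.liftAlgHom (M := Submonoid.powers h) (f := ψ) (by
      rintro ⟨_, n, rfl⟩
      simpa using hu.pow n)
  obtain ⟨P⟩ := hst.nonempty_standardEtalePresentation
  have hm := P.hasMap.map ψ'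
  have hT := (HenselianLocalRing.TFAE R).out 0 1
  obtain ⟨a, ha, hra⟩ := hT.1 inferInstance P.f P.monic_f (ψ' P.x) hm.1
    hm.isUnit_derivative_f.ne_zero
  have hga : P.P.HasMap a := by
    refine ⟨by simpa [aeval_def] using ha, ?_⟩
    have := hm.2
    rw [← hra] at this
    have h2 : aeval (residue R a) P.g = residue R (aeval a P.g) := by
      rw [← ResidueField.algebraMap_eq, aeval_algebraMap_apply]
    rw [h2] at this
    exact (isUnit_map_iff (residue R) _).1 this
  let σ' : Localization.Away h →ₐ[R] R := (P.P.lift a hga).comp P.equivRing.toAlgHom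
  have key : (Algebra.ofId R (ResidueField R)).comp σ' = ψ' := by
    have : ((Algebra.ofId R (ResidueField R)).comp σ').comp P.equivRing.symm.toAlgHom
       = ψ'.comp P.equivRing.symm.toAlgHom := by
      apply StandardEtalePair.hom_ext
      simp [σ', Algebra.ofId_apply, hra]
    refine AlgHom.ext fun x => ?_
    have := congr($this (P.equivRing x))
    simpa using this
  refine ⟨σ'.comp (IsScalarTower.toAlgHom R A (Localization.Away h)), ?_⟩
  rw [← AlgHom.comp_assoc, key]
  ext x
  simp [ψ']

theorem hensel_factor (R : Type u) [CommRing R] [HenselianLocalRing R]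
    (P : R[X]) (hP : P.Monic) :
    ∃ A B : R[X], P = A * B ∧ IsCoprime A B ∧ IsUnit (A.eval 1) ∧ IsUnit (B.eval 0) := by
  set p := P.map (algebraMap R (ResidueField R)) with hp
  have hpm : p.Monic := hP.map _
  obtain ⟨q, hq, hq0⟩ := Polynomial.exists_eq_pow_rootMultiplicity_mul_and_not_dvd p hpm.ne_zero 0
  set a := p.rootMultiplicity 0
  rw [C_0, sub_zero] at hq hq0
  have hqm : q.Monic := (monic_X_pow a).of_mul_monic_left (hq ▸ hpm)
  have hcop : IsCoprime (X ^ a : (ResidueField R)[X]) q :=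
    ((irreducible_X).coprime_iff_not_dvd.2 hq0).pow_left
  have hdeg : P.natDegree = a + q.natDegree := by
    have := congr(($hq).natDegree)
    rwa [(monic_X_pow a).natDegree_mul hqm, natDegree_X_pow, hP.natDegree_map] at this
  let ψ := (UniversalCoprimeFactorizationRing.homEquiv (ResidueField R) a q.natDegree hdeg
    (.mk P hP rfl)).symm ⟨(.mk (X ^ a) (monic_X_pow a) (by simp), .mk q hqm rfl), by
      refine ⟨?_, hcop⟩
      exact hq.symm⟩
  obtain ⟨σ, hσ⟩ := etale_section R _ ψ
  have h1 := UniversalCoprimeFactorizationRing.homEquiv_comp_fst R a q.natDegree hdeg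
    (.mk P hP rfl) σ (Algebra.ofId R (ResidueField R))
  have h2 := UniversalCoprimeFactorizationRing.homEquiv_comp_snd R a q.natDegree hdeg
    (.mk P hP rfl) σ (Algebra.ofId R (ResidueField R))
  rw [hσ] at h1 h2
  simp only [ψ, Equiv.apply_symm_apply] at h1 h2
  obtain ⟨h3, h4⟩ := (UniversalCoprimeFactorizationRing.homEquiv R a q.natDegree hdeg
    (.mk P hP rfl) σ).2
  set F := (UniversalCoprimeFactorizationRing.homEquiv R a q.natDegree hdeg
    (.mk P hP rfl) σ).1
  have h1' : (X ^ a : (ResidueField R)[X]) = F.1.1.map (algebraMap R (ResidueField R)) :=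
    congrArg Subtype.val h1
  have h2' : q = F.2.1.map (algebraMap R (ResidueField R)) :=
    congrArg Subtype.val h2
  refine ⟨F.1.1, F.2.1, ?_, h4, ?_, ?_⟩
  · rw [h3]; simp
  · apply (isUnit_map_iff (residue R) _).1
    rw [← ResidueField.algebraMap_eq, ← eval₂_at_apply, ← Polynomial.eval_map, ← h1']
    simp
  · apply (isUnit_map_iff (residue R) _).1
    rw [← ResidueField.algebraMap_eq, ← eval₂_at_apply, ← Polynomial.eval_map, ← h2', isUnit_iff_ne_zero]
    rw [map_zero, ← coeff_zero_eq_eval_zero]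
    rwa [X_dvd_iff] at hq0

end PartA


section PartB
open Polynomial

/-- Splitting off the part of an endomorphism `φ` with `f φ = f` on which `f` vanishes. -/
theorem split_endo (R : Type u) [CommRing R] [HenselianLocalRing R]
    {X M : Type u} [AddCommGroup X] [Module R X] [Module.Finite R X] [AddCommGroup M] [Module R M]
    (f : X →ₗ[R] M) (φ : X →ₗ[R] X) (h : f ∘ₗ φ = f) :
    ∃ A B : Submodule R X, IsCompl A B ∧ A ≤ LinearMap.ker f ∧
      (A = ⊥ → Function.Bijective φ) := by
  obtain ⟨P, hP, hP0⟩ := LinearMap.exists_monic_and_aeval_eq_zero R φ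
  obtain ⟨A, B, hAB, hc, hA, hB⟩ := hensel_factor R P hP
  have hpow : ∀ n : ℕ, f ∘ₗ (φ ^ n) = f := by
    intro n
    induction n with
    | zero => rfl
    | succ n ih => rw [pow_succ, Module.End.mul_eq_comp, ← LinearMap.comp_assoc, ih, h]
  have hev : ∀ (q : R[X]) x, f (aeval φ q x) = q.eval 1 • f x := by
    intro q x
    induction q using Polynomial.induction_on' with
    | add p q hp hq => simp [hp, hq, add_smul]
    | monomial n a =>
      have := congr($(hpow n) x)
      simp only [LinearMap.comp_apply] at this
      simp [aeval_monomial, Module.algebraMap_end_apply, this]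
  refine ⟨LinearMap.ker (aeval φ A), LinearMap.ker (aeval φ B), ?_, ?_, ?_⟩
  · refine ⟨Polynomial.disjoint_ker_aeval_of_isCoprime φ hc, codisjoint_iff.2 ?_⟩
    rw [Polynomial.sup_ker_aeval_eq_ker_aeval_mul_of_coprime φ hc, ← hAB, hP0, LinearMap.ker_zero]
  · intro x hx
    rw [LinearMap.mem_ker] at hx ⊢
    have := hev A x
    rw [hx, map_zero] at this
    exact (hA.smul_eq_zero).1 this.symm
  · intro hbot
    have hB0 : aeval φ B = 0 := by
      have h1 : aeval φ A ∘ₗ aeval φ B = 0 := by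
        rw [← Module.End.mul_eq_comp, ← map_mul, ← hAB, hP0]
      ext x
      exact LinearMap.ker_eq_bot.1 hbot (by simpa using congr($h1 x))
    have hdec := Polynomial.divX_mul_X_add B
    obtain ⟨u, hu⟩ := hB
    have hx : ∀ x, aeval φ B.divX (φ x) + (u : R) • x = 0 := by
      intro x
      have := congr(aeval φ $hdec x)
      rw [hB0] at this
      simpa [Module.algebraMap_end_apply, coeff_zero_eq_eval_zero, hu] using this
    have hx' : ∀ x, φ (aeval φ B.divX x) + (u : R) • x = 0 := by
      intro x
      rw [← hx x]
      congr 1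
      have : φ * aeval φ B.divX = aeval φ B.divX * φ := by
        have := map_mul (Polynomial.aeval φ) (Polynomial.X : R[X]) B.divX
        rw [mul_comm, map_mul, aeval_X] at this
        exact this.symm
      exact congr($this x)
    refine ⟨(injective_iff_map_eq_zero φ).2 fun x h0 => ?_, fun y => ?_⟩
    · have := hx x
      rw [h0, map_zero, zero_add] at this
      exact (u.isUnit.smul_eq_zero).1 this
    · refine ⟨-((u⁻¹ : Rˣ) : R) • aeval φ B.divX y, ?_⟩
      have := hx' y
      rw [map_smul, eq_neg_of_add_eq_zero_left this, smul_neg, neg_smul, neg_neg, smul_smul]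
      simp

/-- A right minimal right approximation exists. -/
theorem exists_min_approx (R : Type u) [CommRing R] [HenselianLocalRing R]
    (𝒳 : Set (ModuleCat.{u} R)) (h𝒳 : IsResolving R 𝒳)
    (M : ModuleCat.{u} R) (h : HasRightApprox R 𝒳 M) :
    ∃ (X : ModuleCat.{u} R) (f : X →ₗ[R] M), IsRightApprox R 𝒳 f ∧
      ∀ φ : X →ₗ[R] X, f ∘ₗ φ = f → Function.Bijective φ := by
  let k := ResidueField R
  let μ : ModuleCat.{u} R → ℕ := fun X => Module.finrank k (TensorProduct R k X)
  have hex : ∃ n, ∃ (X : ModuleCat.{u} R) (f : X →ₗ[R] M), IsRightApprox R 𝒳 f ∧ μ X = n := by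
    obtain ⟨X, f, hf⟩ := h
    exact ⟨_, X, f, hf, rfl⟩
  classical
  obtain ⟨X, f, hf, hμ⟩ := Nat.find_spec hex
  refine ⟨X, f, hf, fun φ hφ => ?_⟩
  have : Module.Finite R X := h𝒳.finite X hf.1
  obtain ⟨A, B, hAB, hAf, hA⟩ := split_endo R f φ hφ
  apply hA
  by_contra hne
  let e := Submodule.prodEquivOfIsCompl A B hAB
  have hB : ModuleCat.of R B ∈ 𝒳 := by
    refine h𝒳.summandClosed (ModuleCat.of R B) (ModuleCat.of R A) ?_
    exact h𝒳.isoClosed hf.1 (N := ModuleCat.of R (B × A))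
      ((LinearEquiv.prodComm R B A).trans e).symm
  have hfB : IsRightApprox R 𝒳 (X := ModuleCat.of R B) (f ∘ₗ B.subtype) := by
    refine ⟨hB, fun W hW g => ?_⟩
    obtain ⟨h, rfl⟩ := hf.2 W hW g
    refine ⟨LinearMap.snd R A B ∘ₗ e.symm.toLinearMap ∘ₗ h, ?_⟩
    ext w
    have h1 : e (e.symm (h w)) = h w := e.apply_symm_apply _
    have h2 : ((e.symm (h w)).1 : X) + (e.symm (h w)).2 = h w := h1
    have h3 : f (e.symm (h w)).1 = 0 := hAf (e.symm (h w)).1.2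
    have h4 : f (e.symm (h w)).2 = f (h w) := by
      have h5 := congrArg f h2
      rw [map_add, h3, zero_add] at h5
      exact h5
    exact h4
  have hlt := Nat.find_min' hex ⟨ModuleCat.of R B, _, hfB, rfl⟩
  rw [← hμ] at hlt
  have hfinB : Module.Finite R B := h𝒳.finite _ hB
  have hfinA : Module.Finite R A :=
    Module.Finite.of_surjective (LinearMap.fst R A B ∘ₗ e.symm.toLinearMap)
      (Prod.fst_surjective.comp e.symm.surjective)
  have hsum : μ X = Module.finrank k (TensorProduct R k A) + Module.finrank k (TensorProduct R k B) := by
    rw [← Module.finrank_prod]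
    exact LinearEquiv.finrank_eq ((e.symm.baseChange R k X (A × B)).trans
      (TensorProduct.prodRight R k k A B))
  have hnt : Nontrivial A := (Submodule.nontrivial_iff_ne_bot).2 hne
  have hpos : 0 < Module.finrank k (TensorProduct R k A) := by
    rw [Module.finrank_pos_iff]
    by_contra hcon
    rw [not_nontrivial_iff_subsingleton, IsLocalRing.subsingleton_tensorProduct] at hcon
    exact not_subsingleton A hcon
  have : μ (ModuleCat.of R B) = Module.finrank k (TensorProduct R k B) := rfl
  omega

theorem wakamatsu (R : Type u) [CommRing R] [HenselianLocalRing R]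
    (𝒳 : Set (ModuleCat.{u} R)) (h𝒳 : IsResolving R 𝒳)
    (M X : ModuleCat.{u} R) (f : X →ₗ[R] M) (hf : IsRightApprox R 𝒳 f)
    (hmin : ∀ φ : X →ₗ[R] X, f ∘ₗ φ = f → Function.Bijective φ)
    (A F W : ModuleCat.{u} R) (i : A →ₗ[R] F) (p : F →ₗ[R] W) (hs : IsSES R i p) (hW : W ∈ 𝒳)
    (g : A →ₗ[R] LinearMap.ker f) : ∃ g' : F →ₗ[R] LinearMap.ker f, g' ∘ₗ i = g := by
  let g₀ : A →ₗ[R] X := (LinearMap.ker f).subtype ∘ₗ g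
  let N : Submodule R (X × F) := LinearMap.range (g₀.prod (-i))
  let inX : X →ₗ[R] (X × F) ⧸ N := N.mkQ ∘ₗ LinearMap.inl R X F
  let inF : F →ₗ[R] (X × F) ⧸ N := N.mkQ ∘ₗ LinearMap.inr R X F
  have hcomm : ∀ a, inX (g₀ a) = inF (i a) := by
    intro a
    refine (Submodule.Quotient.eq N).2 ⟨a, ?_⟩
    ext <;> simp
  let pW : (X × F) ⧸ N →ₗ[R] W := N.liftQ (p ∘ₗ LinearMap.snd R X F) (by
    rintro _ ⟨a, rfl⟩
    simp [hs.2.1.apply_apply_eq_zero a])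
  have hP : ModuleCat.of R ((X × F) ⧸ N) ∈ 𝒳 := by
    refine h𝒳.extClosed X (ModuleCat.of R ((X × F) ⧸ N)) W inX pW ⟨?_, ?_, ?_⟩ hf.1 hW
    · refine (injective_iff_map_eq_zero inX).2 fun x hx => ?_
      obtain ⟨a, ha⟩ := (Submodule.Quotient.mk_eq_zero N).1 hx
      have h2 : -i a = 0 := congr(($ha).2)
      have h1 : g₀ a = x := congr(($ha).1)
      have : a = 0 := hs.1 (by simpa using h2)
      rw [← h1, this, map_zero]
    · intro y
      constructor
      · obtain ⟨⟨x, z⟩, rfl⟩ := N.mkQ_surjective y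
        intro hy
        have hz : p z = 0 := hy
        obtain ⟨a, rfl⟩ := (hs.2.1 z).1 hz
        refine ⟨x + g₀ a, ?_⟩
        rw [map_add, hcomm]
        change N.mkQ (x, 0) + N.mkQ (0, i a) = _
        rw [← map_add]; simp
      · rintro ⟨x, rfl⟩
        change p 0 = 0
        simp
    · intro w
      obtain ⟨z, rfl⟩ := hs.2.2 w
      exact ⟨inF z, rfl⟩
  let t : (X × F) ⧸ N →ₗ[R] M := N.liftQ (f ∘ₗ LinearMap.fst R X F) (by
    rintro _ ⟨a, rfl⟩
    exact (g a).2)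
  obtain ⟨h, hh⟩ := hf.2 (ModuleCat.of R ((X × F) ⧸ N)) hP t
  have hφ : f ∘ₗ (h ∘ₗ inX) = f := by
    rw [← LinearMap.comp_assoc, hh]
    ext x; rfl
  have hb := hmin _ hφ
  let e := LinearEquiv.ofBijective (h ∘ₗ inX) hb
  have hfe : ∀ x, f (e.symm x) = f x := by
    intro x
    have := congr($hφ (e.symm x))
    rw [← this]
    exact congrArg f (e.apply_symm_apply x)
  refine ⟨LinearMap.codRestrict _ (e.symm.toLinearMap ∘ₗ h ∘ₗ inF) (fun z => ?_), ?_⟩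
  · rw [LinearMap.mem_ker]
    change f (e.symm (h (inF z))) = 0
    rw [hfe]
    have : f (h (inF z)) = t (inF z) := congr($hh (inF z))
    rw [this]
    change f 0 = 0
    simp
  · ext a
    change e.symm (h (inF (i a))) = g₀ a
    rw [← hcomm]
    exact e.symm_apply_apply (g₀ a)

end PartB


section PartC1

/-- Projective dimension less than `n`. -/
abbrev PDLT (R : Type u) [CommRing R] (M : Type u) [AddCommGroup M] [Module R M] (n : ℕ) : Prop :=
  HasProjectiveDimensionLT (ModuleCat.of R M) n

theorem ses_shortExact {R : Type u} [CommRing R] {A B C : Type u} [AddCommGroup A] [Module R A]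
    [AddCommGroup B] [Module R B] [AddCommGroup C] [Module R C]
    (i : A →ₗ[R] B) (p : B →ₗ[R] C) (hi : Function.Injective i) (he : Function.Exact i p)
    (hp : Function.Surjective p) :
    ∃ h : ModuleCat.ofHom i ≫ ModuleCat.ofHom p = 0,
      (ShortComplex.mk (ModuleCat.ofHom i) (ModuleCat.ofHom p) h).ShortExact := by
  have h0 : ModuleCat.ofHom i ≫ ModuleCat.ofHom p = 0 := by
    ext a
    exact he.apply_apply_eq_zero a
  refine ⟨h0, ?_⟩
  have : Mono (ModuleCat.ofHom i) := (ModuleCat.mono_iff_injective _).2 hi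
  have : Epi (ModuleCat.ofHom p) := (ModuleCat.epi_iff_surjective _).2 hp
  exact { exact := (ShortComplex.ShortExact.moduleCat_exact_iff_function_exact _).mpr he }

variable {R : Type u} [CommRing R] {A B C : Type u} [AddCommGroup A] [Module R A]
    [AddCommGroup B] [Module R B] [AddCommGroup C] [Module R C]

theorem pd_one_iff : PDLT R A 1 ↔ Module.Projective R A := by
  exact projective_iff_hasProjectiveDimensionLT_one.symm.trans
    (IsProjective.iff_projective (R := R) A).symm

theorem pd_of_equiv (e : A ≃ₗ[R] B) {n : ℕ} (h : PDLT R A n) : PDLT R B n :=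
  hasProjectiveDimensionLT_of_iso (e.toModuleIso) n

theorem pd_X3_iff (i : A →ₗ[R] B) (p : B →ₗ[R] C) (hi : Function.Injective i)
    (he : Function.Exact i p) (hp : Function.Surjective p) [Module.Projective R B] (n : ℕ) :
    PDLT R C (n + 2) ↔ PDLT R A (n + 1) := by
  obtain ⟨h, hS⟩ := ses_shortExact i p hi he hp
  exact hS.hasProjectiveDimensionLT_X₃_iff n
    ((IsProjective.iff_projective (R := R) B).1 inferInstance)

theorem pd_X1 (i : A →ₗ[R] B) (p : B →ₗ[R] C) (hi : Function.Injective i)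
    (he : Function.Exact i p) (hp : Function.Surjective p) (n : ℕ) (hB : PDLT R B n)
    (hC : PDLT R C (n + 1)) : PDLT R A n := by
  obtain ⟨h, hS⟩ := ses_shortExact i p hi he hp
  exact hS.hasProjectiveDimensionLT_X₁ n hB hC

theorem pd_prod {n : ℕ} (hA : PDLT R A n) (hB : PDLT R B n) : PDLT R (A × B) n := by
  obtain ⟨h, hS⟩ := ses_shortExact (LinearMap.inl R A B) (LinearMap.snd R A B)
    LinearMap.inl_injective Function.Exact.inl_snd Prod.snd_surjective
  exact hS.hasProjectiveDimensionLT_X₂ n hA hB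

theorem pd_pow {n : ℕ} (hA : PDLT R A n) (m : ℕ) : PDLT R (Fin m → A) n := by
  induction m with
  | zero =>
    have : Limits.IsZero (ModuleCat.of R (Fin 0 → A)) := ModuleCat.isZero_of_subsingleton _
    have := this.hasProjectiveDimensionLT_zero
    exact hasProjectiveDimensionLT_of_ge _ 0 n (Nat.zero_le _)
  | succ m ih => exact pd_of_equiv (Fin.consLinearEquiv R (fun _ => A)) (pd_prod hA ih)

/-- Lifting projective dimension modulo a regular element. -/
theorem pd_lift [IsLocalRing R] [IsNoetherianRing R] (x : R) (hx : x ∈ maximalIdeal R)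
    (hreg : IsSMulRegular R x) (p : ℕ) : ∀ (V : Type u) [AddCommGroup V] [Module R V]
    [Module.Finite R V], IsSMulRegular V x →
    PDLT (R ⧸ Ideal.span {x}) (QuotSMulTop x V) (p + 1) → PDLT R V (p + 1) := by
  have hxj : x ∈ (⊥ : Ideal R).jacobson := by
    rwa [IsLocalRing.jacobson_eq_maximalIdeal ⊥ bot_ne_top]
  have : Nontrivial (R ⧸ Ideal.span {x}) := Ideal.Quotient.nontrivial_iff.2 (by
    rw [Ne, Ideal.span_singleton_eq_top]; exact hx)
  have : IsLocalRing (R ⧸ Ideal.span {x}) :=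
    IsLocalRing.of_surjective' (Ideal.Quotient.mk _) Ideal.Quotient.mk_surjective
  induction p with
  | zero =>
    intro V _ _ _ hV h
    rw [zero_add, pd_one_iff] at h ⊢
    have := Module.Finite.of_restrictScalars_finite R (R ⧸ Ideal.span {x}) (QuotSMulTop x V)
    have : Module.Free (R ⧸ Ideal.span {x}) (QuotSMulTop x V) := Module.free_of_flat_of_isLocalRing
    have : Module.FinitePresentation R V := Module.finitePresentation_of_finite R V
    have := (Module.free_quotSMulTop_iff_free R V hxj hV).1 ‹_›
    infer_instance
  | succ p ih =>
    intro V _ _ _ hV h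
    obtain ⟨n, f, hf⟩ := Module.Finite.exists_fin' R V
    have hFreg : IsSMulRegular (Fin n → R) x := IsSMulRegular.pi (fun _ => hreg)
    have hex : Function.Exact (LinearMap.ker f).subtype f := LinearMap.exact_subtype_ker_map f
    rw [pd_X3_iff (LinearMap.ker f).subtype f Subtype.val_injective hex hf]
    apply ih
    · exact hFreg.submodule _ _
    · let a := (QuotSMulTop.map x (LinearMap.ker f).subtype).extendScalarsOfSurjective
        (S := R ⧸ Ideal.span {x}) Ideal.Quotient.mk_surjective
      let b := (QuotSMulTop.map x f).extendScalarsOfSurjective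
        (S := R ⧸ Ideal.span {x}) Ideal.Quotient.mk_surjective
      refine (pd_X3_iff a b ?_ ?_ ?_ p).1 h
      · refine (injective_iff_map_eq_zero a).2 fun z hz => ?_
        obtain ⟨v, rfl⟩ := Submodule.mkQ_surjective _ z
        have h1 : (Submodule.Quotient.mk (v : Fin n → R) : QuotSMulTop x (Fin n → R)) = 0 := hz
        rw [Submodule.Quotient.mk_eq_zero, Submodule.mem_smul_pointwise_iff_exists] at h1
        obtain ⟨w, -, hw⟩ := h1
        have h2 : x • f w = 0 := by rw [← map_smul, hw]; exact v.2
        have h3 : f w = 0 := hV.right_eq_zero_of_smul h2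
        refine (Submodule.Quotient.mk_eq_zero _).2 ?_
        rw [Submodule.mem_smul_pointwise_iff_exists]
        exact ⟨⟨w, h3⟩, trivial, Subtype.ext hw⟩
      · exact QuotSMulTop.map_exact x hex hf
      · exact QuotSMulTop.map_surjective x hf


theorem exists_gens (Q : Type u) [CommRing Q] [IsLocalRing Q] [IsNoetherianRing Q] (n : ℕ)
    (hn : (maximalIdeal Q).spanFinrank ≤ n + 1) (x : Q) (hx : x ∈ maximalIdeal Q)
    (hx2 : x ∉ maximalIdeal Q ^ 2) :
    ∃ T : Set Q, T.Finite ∧ T.ncard ≤ n ∧ maximalIdeal Q = Ideal.span (insert x T) := by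
  let k := ResidueField Q
  let V := CotangentSpace Q
  let π := (maximalIdeal Q).toCotangent
  let v : V := π ⟨x, hx⟩
  have hv : v ≠ 0 := fun h0 => hx2 (((maximalIdeal Q).toCotangent_eq_zero ⟨x, hx⟩).1 h0)
  have hli : LinearIndepOn k id {v} := LinearIndepOn.singleton (by simpa using hv)
  let b := hli.extend (Set.subset_univ _)
  have hb : LinearIndepOn k id b := hli.linearIndepOn_extend _
  have hvb : v ∈ b := hli.subset_extend _ rfl
  have hsp : Submodule.span k b = ⊤ := by
    have := hli.span_extend_eq_span (Set.subset_univ _)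
    simpa using this
  have hbf : b.Finite := hb.finite
  have hcard : b.ncard ≤ n + 1 := by
    have h1 := Module.finrank_eq_nat_card_basis
      (Module.Basis.mk hb.linearIndependent (by simp [hsp]) : Module.Basis b k V)
    have h2 : Module.finrank k V ≤ n + 1 := by
      rwa [spanFinrank_maximalIdeal_eq_finrank_cotangentSpace] at hn
    rw [h1] at h2
    exact h2
  obtain ⟨σ, hσ⟩ := (maximalIdeal Q).toCotangent_surjective.hasRightInverse
  let S : Set (maximalIdeal Q) := σ '' (b \ {v})
  have hS : Submodule.span Q (insert ⟨x, hx⟩ S) = ⊤ := by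
    rw [← CotangentSpace.span_image_eq_top_iff, ← hsp]
    congr 1
    rw [Set.image_insert_eq, Set.image_image]
    simp only [hσ _, Set.image_id']
    exact Set.insert_sdiff_self_of_mem hvb
  refine ⟨Subtype.val '' S, (hbf.sdiff.image _).image _, ?_, ?_⟩
  · refine (Set.ncard_image_le (hbf.sdiff.image _)).trans ((Set.ncard_image_le hbf.sdiff).trans ?_)
    rw [Set.ncard_sdiff_singleton_of_mem hvb]
    omega
  · have := congrArg (Submodule.map (maximalIdeal Q).subtype) hS
    rw [Submodule.map_span, Submodule.map_top, Submodule.range_subtype, Set.image_insert_eq] at this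
    exact this.symm

theorem regular_domain_gldim (n : ℕ) : ∀ (Q : Type u) [CommRing Q] [IsLocalRing Q]
    [IsNoetherianRing Q], (maximalIdeal Q).spanFinrank ≤ n → (n : WithBot ℕ∞) ≤ ringKrullDim Q →
    IsDomain Q ∧ ∀ (M : Type u) [AddCommGroup M] [Module Q M] [Module.Finite Q M],
      PDLT Q M (n + 1) := by
  induction n with
  | zero =>
    intro Q _ _ _ h1 _
    have : maximalIdeal Q = ⊥ :=
      (Submodule.spanFinrank_eq_zero_iff_eq_bot (IsNoetherian.noetherian _)).1 (by omega)
    have hF : IsField Q := IsLocalRing.isField_iff_maximalIdeal_eq.2 this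
    let := hF.toField
    refine ⟨inferInstance, fun M _ _ _ => ?_⟩
    rw [zero_add, pd_one_iff]
    infer_instance
  | succ n ih =>
    intro Q _ _ _ h1 h2
    obtain ⟨x, hx, hx2, hxmin⟩ : ∃ x ∈ maximalIdeal Q, x ∉ maximalIdeal Q ^ 2 ∧
        ∀ P ∈ minimalPrimes Q, x ∉ P := by
      by_contra! hcon
      have hsub : (maximalIdeal Q : Set Q) ⊆
          ⋃ i ∈ (insert (maximalIdeal Q ^ 2) (minimalPrimes Q)), ((id i : Ideal Q) : Set Q) := by
        intro x hx
        by_cases hx2 : x ∈ maximalIdeal Q ^ 2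
        · exact Set.mem_biUnion (Set.mem_insert _ _) hx2
        · obtain ⟨P, hP, hxP⟩ := hcon x hx hx2
          exact Set.mem_biUnion (Set.mem_insert_of_mem _ hP) hxP
      rw [Ideal.subset_union_prime_finite
        ((minimalPrimes.finite_of_isNoetherianRing Q).insert _) (maximalIdeal Q ^ 2)
        (maximalIdeal Q ^ 2)] at hsub
      · obtain ⟨P, hP, hle⟩ := hsub
        have hht : (maximalIdeal Q).height ≠ 0 := by
          intro h0
          rw [← IsLocalRing.maximalIdeal_height_eq_ringKrullDim, h0] at h2
          have h3 : ((n + 1 : ℕ) : ℕ∞) ≤ 0 := by exact_mod_cast h2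
          simp at h3
        rcases hP with rfl | hP
        · apply hht
          rw [id, pow_two] at hle
          have := Submodule.eq_bot_of_le_smul_of_le_jacobson_bot (maximalIdeal Q) (maximalIdeal Q)
            (IsNoetherian.noetherian _) hle (IsLocalRing.maximalIdeal_le_jacobson _)
          rw [this, Ideal.height_bot]
        · apply hht
          have hPp : P.IsPrime := hP.1.1
          have : maximalIdeal Q = P := le_antisymm hle (IsLocalRing.le_maximalIdeal hPp.ne_top)
          rw [this, Ideal.height_eq_zero_iff]
          exact hP
      · intro P hP hne _
        exact (Set.mem_of_mem_insert_of_ne hP hne).1.1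
    obtain ⟨T, hTf, hTc, hT⟩ := exists_gens Q n h1 x hx hx2
    have : Nontrivial (Q ⧸ Ideal.span {x}) := Ideal.Quotient.nontrivial_iff.2 (by
      rw [Ne, Ideal.span_singleton_eq_top]; exact hx)
    have : IsLocalRing (Q ⧸ Ideal.span {x}) :=
      IsLocalRing.of_surjective' (Ideal.Quotient.mk _) Ideal.Quotient.mk_surjective
    have hmax : maximalIdeal (Q ⧸ Ideal.span {x}) =
        Ideal.span (Ideal.Quotient.mk (Ideal.span {x}) '' T) := by
      have hm : ((maximalIdeal Q).map (Ideal.Quotient.mk (Ideal.span {x}))).IsMaximal :=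
        Ideal.IsMaximal.map_of_surjective_of_ker_le Ideal.Quotient.mk_surjective (by
          rw [Ideal.mk_ker, Ideal.span_singleton_le_iff_mem]; exact hx)
      rw [← IsLocalRing.eq_maximalIdeal hm, hT, Ideal.map_span, Set.image_insert_eq]
      rw [Ideal.Quotient.eq_zero_iff_mem.2 (Ideal.mem_span_singleton_self x), Ideal.span_insert_zero]
    have hsr : (maximalIdeal (Q ⧸ Ideal.span {x})).spanFinrank ≤ n := by
      rw [hmax]
      exact (Submodule.spanFinrank_span_le_ncard_of_finite (hTf.image _)).trans
        ((Set.ncard_image_le hTf).trans hTc)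
    have hd : (n : WithBot ℕ∞) ≤ ringKrullDim (Q ⧸ Ideal.span {x}) := by
      have h3 := ringKrullDim_le_ringKrullDim_quotient_add_card ({x} : Finset Q) (by
        rw [Finset.coe_singleton, Set.singleton_subset_iff]
        rw [IsLocalRing.ringJacobson_eq_maximalIdeal]; exact hx)
      have h4 := h2.trans h3
      rw [Finset.coe_singleton, Finset.card_singleton, Nat.cast_add] at h4
      exact ENat.WithBot.add_le_add_natCast_right_iff.1 h4
    obtain ⟨hdom, hgl⟩ := ih _ hsr hd
    have hprime : (Ideal.span {x}).IsPrime := (Ideal.Quotient.isDomain_iff_prime _).1 hdom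
    have hD : IsDomain Q := by
      obtain ⟨P, hP, hPx⟩ := Ideal.exists_minimalPrimes_le (bot_le : ⊥ ≤ Ideal.span {x})
      have hPp : P.IsPrime := hP.1.1
      have hPb : P = ⊥ := by
        apply Submodule.eq_bot_of_le_smul_of_le_jacobson_bot (maximalIdeal Q) P
          (IsNoetherian.noetherian _) _ (IsLocalRing.maximalIdeal_le_jacobson _)
        intro y hy
        obtain ⟨a, rfl⟩ := Ideal.mem_span_singleton'.1 (hPx hy)
        have : a ∈ P := (hPp.mem_or_mem hy).resolve_right (hxmin P hP)
        rw [mul_comm]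
        exact Submodule.smul_mem_smul hx this
      rw [hPb] at hPp
      exact IsDomain.of_bot_isPrime Q
    refine ⟨hD, fun M _ _ _ => ?_⟩
    have hx0 : x ≠ 0 := fun h0 => hx2 (h0 ▸ Ideal.zero_mem _)
    have hreg : IsSMulRegular Q x := IsSMulRegular.of_ne_zero hx0
    obtain ⟨m, f, hf⟩ := Module.Finite.exists_fin' Q M
    have hFreg : IsSMulRegular (Fin m → Q) x := IsSMulRegular.pi (fun _ => hreg)
    have hex : Function.Exact (LinearMap.ker f).subtype f := LinearMap.exact_subtype_ker_map f
    rw [pd_X3_iff (LinearMap.ker f).subtype f Subtype.val_injective hex hf]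
    have : Module.Finite (Q ⧸ Ideal.span {x}) (QuotSMulTop x (LinearMap.ker f)) :=
      Module.Finite.of_restrictScalars_finite Q _ _
    exact pd_lift x hx hreg n _ (hFreg.submodule _ _) (hgl _)

end PartC1


section PartC2
open TensorProduct

/-- Classes of finite modules closed under extensions and syzygies. -/
structure SyzClass (R : Type u) [CommRing R] (𝒴 : Set (ModuleCat.{u} R)) : Prop where
  finite : ∀ {A : Type u} [AddCommGroup A] [Module R A], ModuleCat.of R A ∈ 𝒴 → Module.Finite R A
  free : ∀ n : ℕ, ModuleCat.of R (Fin n → R) ∈ 𝒴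
  ext : ∀ {A B C : Type u} [AddCommGroup A] [Module R A] [AddCommGroup B] [Module R B]
    [AddCommGroup C] [Module R C] (i : A →ₗ[R] B) (p : B →ₗ[R] C), Function.Injective i →
    Function.Exact i p → Function.Surjective p → ModuleCat.of R A ∈ 𝒴 → ModuleCat.of R C ∈ 𝒴 →
    ModuleCat.of R B ∈ 𝒴
  syz : ∀ {A C : Type u} [AddCommGroup A] [Module R A] [AddCommGroup C] [Module R C] {n : ℕ}
    (i : A →ₗ[R] (Fin n → R)) (p : (Fin n → R) →ₗ[R] C), Function.Injective i →
    Function.Exact i p → Function.Surjective p → ModuleCat.of R C ∈ 𝒴 → ModuleCat.of R A ∈ 𝒴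

theorem SyzClass.iso {R : Type u} [CommRing R] {𝒴 : Set (ModuleCat.{u} R)} (h : SyzClass R 𝒴)
    {A B : Type u} [AddCommGroup A] [Module R A] [AddCommGroup B] [Module R B] (e : A ≃ₗ[R] B)
    (hA : ModuleCat.of R A ∈ 𝒴) : ModuleCat.of R B ∈ 𝒴 := by
  refine h.ext e.toLinearMap (0 : B →ₗ[R] (Fin 0 → R)) e.injective ?_
    (fun y => ⟨0, Subsingleton.elim _ _⟩) hA (h.free 0)
  intro y
  simp

variable {S R : Type u} [CommRing S] [CommRing R] [Algebra S R]

theorem tmk_zero (hsurj : Function.Surjective (algebraMap S R)) (x : S)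
    (hker : RingHom.ker (algebraMap S R) = Ideal.span {x}) {U : Type u} [AddCommGroup U]
    [Module S U] (w : U) : (1 : R) ⊗ₜ[S] w = 0 ↔ ∃ v, w = x • v := by
  constructor
  · intro h
    let e0 : (S ⧸ Ideal.span {x}) ≃ₗ[S] R :=
      (Submodule.quotEquivOfEq _ _ (by rw [← hker]; rfl)).trans
        ((Algebra.linearMap S R).quotKerEquivOfSurjective hsurj)
    let e := (QuotSMulTop.equivQuotTensor x U).trans (LinearEquiv.rTensor U e0)
    have h1 : e (Submodule.Quotient.mk w) = (1 : R) ⊗ₜ[S] w := by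
      have : e (Submodule.Quotient.mk w) = e0 (Submodule.Quotient.mk 1) ⊗ₜ[S] w := rfl
      rw [this]
      have : e0 (Submodule.Quotient.mk 1) = algebraMap S R 1 := rfl
      rw [this, map_one]
    rw [h] at h1
    have h2 := e.map_eq_zero_iff.1 h1
    rw [Submodule.Quotient.mk_eq_zero, Submodule.mem_smul_pointwise_iff_exists] at h2
    obtain ⟨v, -, hv⟩ := h2
    exact ⟨v, hv.symm⟩
  · rintro ⟨v, rfl⟩
    rw [TensorProduct.tmul_smul, TensorProduct.smul_tmul', Algebra.smul_def, mul_one]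
    have : x ∈ RingHom.ker (algebraMap S R) := hker ▸ Ideal.mem_span_singleton_self x
    rw [(RingHom.mem_ker).1 this, TensorProduct.zero_tmul]

theorem tmk_surj (hsurj : Function.Surjective (algebraMap S R)) {U : Type u} [AddCommGroup U]
    [Module S U] (z : R ⊗[S] U) : ∃ w : U, (1 : R) ⊗ₜ[S] w = z :=
  TensorProduct.mk_surjective S U R hsurj z

theorem ses_tensor (hsurj : Function.Surjective (algebraMap S R)) (x : S)
    (hker : RingHom.ker (algebraMap S R) = Ideal.span {x}) {A B C : Type u}
    [AddCommGroup A] [Module S A] [AddCommGroup B] [Module S B] [AddCommGroup C] [Module S C]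
    (i : A →ₗ[S] B) (p : B →ₗ[S] C) (hi : Function.Injective i) (he : Function.Exact i p)
    (hp : Function.Surjective p) (hC : IsSMulRegular C x) :
    Function.Injective (i.baseChange R) ∧ Function.Exact (i.baseChange R) (p.baseChange R) ∧
      Function.Surjective (p.baseChange R) := by
  refine ⟨?_, lTensor_exact R he hp, LinearMap.lTensor_surjective R hp⟩
  refine (injective_iff_map_eq_zero _).2 fun z hz => ?_
  obtain ⟨a, rfl⟩ := tmk_surj hsurj z
  rw [LinearMap.baseChange_tmul, tmk_zero hsurj x hker] at hz
  obtain ⟨b, hb⟩ := hz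
  have h1 : x • p b = 0 := by rw [← map_smul, ← hb]; exact he.apply_apply_eq_zero a
  obtain ⟨a', rfl⟩ := (he b).1 (hC.right_eq_zero_of_smul h1)
  rw [← map_smul] at hb
  exact (tmk_zero hsurj x hker a).2 ⟨a', hi hb⟩

/-- The class lifted along `S → R = S/x`. -/
def liftClass (R : Type u) [CommRing R] [Algebra S R] (x : S) (𝒴 : Set (ModuleCat.{u} R)) :
    Set (ModuleCat.{u} S) :=
  {U | Module.Finite S U ∧ IsSMulRegular U x ∧ ModuleCat.of R (R ⊗[S] U) ∈ 𝒴}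

theorem liftClass_syz [IsNoetherianRing S] (hsurj : Function.Surjective (algebraMap S R)) (x : S)
    (hker : RingHom.ker (algebraMap S R) = Ideal.span {x}) (hx : IsSMulRegular S x)
    {𝒴 : Set (ModuleCat.{u} R)} (h : SyzClass R 𝒴) : SyzClass S (liftClass R x 𝒴) where
  finite := fun hA => hA.1
  free := fun n => ⟨inferInstanceAs (Module.Finite S (Fin n → S)),
    (IsSMulRegular.pi (fun _ => hx) : IsSMulRegular (Fin n → S) x),
    h.iso (TensorProduct.piScalarRight S R R (Fin n)).symm (h.free n)⟩
  ext := by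
    intro A B C _ _ _ _ _ _ i p hi he hp hA hC
    obtain ⟨a1, a2, a3⟩ := hA
    obtain ⟨c1, c2, c3⟩ := hC
    obtain ⟨t1, t2, t3⟩ := ses_tensor (R := R) hsurj x hker i p hi he hp c2
    have a1' : Module.Finite S A := a1
    have c1' : Module.Finite S C := c1
    refine ⟨Module.Finite.of_exact he hp, ?_, h.ext _ _ t1 t2 t3 a3 c3⟩
    exact isSMulRegular_of_range_eq_ker hi (LinearMap.exact_iff.1 he).symm a2 c2
  syz := by
    intro A C _ _ _ _ n i p hi he hp hC
    obtain ⟨c1, c2, c3⟩ := hC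
    obtain ⟨t1, t2, t3⟩ := ses_tensor (R := R) hsurj x hker i p hi he hp c2
    let e := TensorProduct.piScalarRight S R R (Fin n)
    refine ⟨Module.Finite.of_injective i hi, ?_,
      h.syz (e.toLinearMap ∘ₗ i.baseChange R) (p.baseChange R ∘ₗ e.symm.toLinearMap)
        (e.injective.comp t1) ?_ (t3.comp e.symm.surjective) c3⟩
    · exact (IsSMulRegular.pi (fun _ => hx) : IsSMulRegular (Fin n → S) x).of_injective i hi
    · intro y
      refine (t2 (e.symm y)).trans ?_
      constructor
      · rintro ⟨z, hz⟩
        exact ⟨z, by simp [hz]⟩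
      · rintro ⟨z, hz⟩
        exact ⟨z, by simp [← hz]⟩

/-- Combining two short exact sequences. -/
theorem embed_comb {𝒴 : Set (ModuleCat.{u} R)} (h : SyzClass R 𝒴) {W V A F C : Type u}
    [AddCommGroup W] [Module R W] [AddCommGroup V] [Module R V] [AddCommGroup A] [Module R A]
    [AddCommGroup F] [Module R F] [AddCommGroup C] [Module R C]
    (i : W →ₗ[R] V) (p : V →ₗ[R] A) (he : Function.Exact i p)
    (hp : Function.Surjective p) (j : V →ₗ[R] F) (q : F →ₗ[R] C) (hj : Function.Injective j)
    (he' : Function.Exact j q) (hq : Function.Surjective q) (hA : ModuleCat.of R A ∈ 𝒴)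
    (hC : ModuleCat.of R C ∈ 𝒴) :
    ModuleCat.of R (F ⧸ LinearMap.range (j ∘ₗ i)) ∈ 𝒴 := by
  have hA' : ModuleCat.of R (V ⧸ LinearMap.range i) ∈ 𝒴 := by
    refine h.iso ?_ hA
    exact ((Submodule.quotEquivOfEq _ _ (LinearMap.exact_iff.1 he).symm).trans
      (p.quotKerEquivOfSurjective hp)).symm
  let a : V ⧸ LinearMap.range i →ₗ[R] F ⧸ LinearMap.range (j ∘ₗ i) :=
    Submodule.mapQ _ _ j (by rintro _ ⟨w, rfl⟩; exact ⟨w, rfl⟩)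
  let b : F ⧸ LinearMap.range (j ∘ₗ i) →ₗ[R] C :=
    Submodule.liftQ _ q (by rintro _ ⟨w, rfl⟩; exact he'.apply_apply_eq_zero _)
  refine h.ext a b ?_ ?_ ?_ hA' hC
  · refine (injective_iff_map_eq_zero _).2 fun z hz => ?_
    obtain ⟨v, rfl⟩ := Submodule.mkQ_surjective _ z
    obtain ⟨w, hw⟩ := (Submodule.Quotient.mk_eq_zero _).1 hz
    exact (Submodule.Quotient.mk_eq_zero _).2 ⟨w, hj hw⟩
  · intro z
    obtain ⟨f, rfl⟩ := Submodule.mkQ_surjective _ z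
    constructor
    · intro hz
      obtain ⟨v, rfl⟩ := (he' f).1 hz
      exact ⟨Submodule.Quotient.mk v, rfl⟩
    · rintro ⟨y, hy⟩
      obtain ⟨v, rfl⟩ := Submodule.mkQ_surjective _ y
      rw [← hy]
      exact he'.apply_apply_eq_zero v
  · intro c
    obtain ⟨f, rfl⟩ := hq c
    exact ⟨Submodule.Quotient.mk f, rfl⟩

/-- The exact sequence `0 → W → V'/xV' → Ω_R W → 0`. -/
theorem change_rings_seq (hsurj : Function.Surjective (algebraMap S R)) (x : S)
    (hker : RingHom.ker (algebraMap S R) = Ideal.span {x}) (hx : IsSMulRegular S x)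
    {W : Type u} [AddCommGroup W] [Module R W] [Module S W] [IsScalarTower S R W] {n : ℕ}
    (f : (Fin n → R) →ₗ[R] W) (hf : Function.Surjective f) (p : (Fin n → S) →ₗ[S] W)
    (hpf : ∀ s, p s = f (fun j => algebraMap S R (s j))) :
    ∃ (i : W →ₗ[R] R ⊗[S] LinearMap.ker p) (q : R ⊗[S] LinearMap.ker p →ₗ[R] LinearMap.ker f),
      Function.Injective i ∧ Function.Exact i q ∧ Function.Surjective q := by
  have hxW : ∀ w : W, x • w = 0 := by
    intro w
    have : x ∈ RingHom.ker (algebraMap S R) := hker ▸ Ideal.mem_span_singleton_self x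
    rw [← algebraMap_smul R, (RingHom.mem_ker).1 this, zero_smul]
  have hp : Function.Surjective p := by
    intro w
    obtain ⟨r, rfl⟩ := hf w
    choose s hs using fun j => hsurj (r j)
    exact ⟨s, by rw [hpf]; congr 1; ext j; exact hs j⟩
  have hxF : IsSMulRegular (Fin n → S) x := IsSMulRegular.pi (fun _ => hx)
  -- the map on the left
  let i1 : (Fin n → S) →ₗ[S] R ⊗[S] LinearMap.ker p :=
    TensorProduct.mk S R (LinearMap.ker p) 1 ∘ₗ
      LinearMap.codRestrict (LinearMap.ker p) (x • LinearMap.id) (fun s => by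
        simp [LinearMap.mem_ker, hxW])
  have hi1 : ∀ s, i1 s = 0 ↔ p s = 0 := by
    intro s
    refine (tmk_zero hsurj x hker _).trans ?_
    constructor
    · rintro ⟨v, hv⟩
      have : x • s = x • (v : Fin n → S) := congrArg Subtype.val hv
      rw [hxF this]
      exact v.2
    · intro hs
      exact ⟨⟨s, hs⟩, rfl⟩
  let i2 : W →ₗ[S] R ⊗[S] LinearMap.ker p :=
    ((LinearMap.ker p).liftQ i1 (fun s hs => (hi1 s).2 hs)) ∘ₗ
      (p.quotKerEquivOfSurjective hp).symm.toLinearMap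
  have hi2 : ∀ s, i2 (p s) = i1 s := by
    intro s
    change ((LinearMap.ker p).liftQ i1 (fun s hs => (hi1 s).2 hs))
      ((p.quotKerEquivOfSurjective hp).symm (p s)) = i1 s
    have : (p.quotKerEquivOfSurjective hp).symm (p s) = Submodule.Quotient.mk s := by
      rw [LinearEquiv.symm_apply_eq]; rfl
    rw [this]; rfl
  -- the map on the right
  let red : (Fin n → S) →ₗ[S] (Fin n → R) := (Algebra.linearMap S R).compLeft (Fin n)
  let q1 : LinearMap.ker p →ₗ[S] LinearMap.ker f :=
    LinearMap.codRestrict ((LinearMap.ker f).restrictScalars S) (red ∘ₗ (LinearMap.ker p).subtype)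
      (fun s => by
        have := hpf s
        rw [s.2] at this
        exact this.symm)
  let q2 : R ⊗[S] LinearMap.ker p →ₗ[R] LinearMap.ker f := LinearMap.liftBaseChange R q1
  have hq2 : ∀ v, q2 (1 ⊗ₜ v) = q1 v := fun v => by
    simp [q2, LinearMap.liftBaseChange_tmul]
  refine ⟨i2.extendScalarsOfSurjective hsurj, q2, ?_, ?_, ?_⟩
  · refine (injective_iff_map_eq_zero _).2 fun w hw => ?_
    obtain ⟨s, rfl⟩ := hp w
    have : i2 (p s) = 0 := hw
    rw [hi2, hi1] at this
    exact this
  · intro z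
    obtain ⟨v, rfl⟩ := tmk_surj hsurj z
    rw [hq2]
    constructor
    · intro hv
      have h1 : ∀ j, algebraMap S R ((v : Fin n → S) j) = 0 := fun j =>
        congrFun (congrArg Subtype.val hv) j
      have h2 : ∀ j, ∃ t, t * x = (v : Fin n → S) j := fun j =>
        Ideal.mem_span_singleton'.1 (hker ▸ (RingHom.mem_ker).2 (h1 j))
      choose t ht using h2
      refine ⟨p t, (hi2 t).trans ?_⟩
      change (1 : R) ⊗ₜ[S] _ = _
      congr 1
      ext j
      simp [← ht j, mul_comm]
    · rintro ⟨w, hw⟩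
      obtain ⟨s, rfl⟩ := hp w
      have hw' : i1 s = 1 ⊗ₜ v := (hi2 s).symm.trans hw
      rw [← hq2, ← hw']
      change q2 (1 ⊗ₜ _) = 0
      rw [hq2]
      ext j
      have : x ∈ RingHom.ker (algebraMap S R) := hker ▸ Ideal.mem_span_singleton_self x
      change algebraMap S R (x * s j) = 0
      rw [map_mul, (RingHom.mem_ker).1 this, zero_mul]
  · rintro ⟨r, hr⟩
    choose s hs using fun j => hsurj (r j)
    have hps : p s = 0 := by
      rw [hpf]
      have : (fun j => algebraMap S R (s j)) = r := by ext j; exact hs j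
      rw [this]; exact hr
    refine ⟨1 ⊗ₜ ⟨s, hps⟩, ?_⟩
    rw [hq2]
    ext j
    exact hs j

end PartC2


section PartC3
open TensorProduct RingTheory.Sequence

theorem pd_quot (Q : Type u) [CommRing Q] [IsLocalRing Q] [IsNoetherianRing Q] (rs : List Q)
    (hreg : IsWeaklyRegular Q rs) (hm : ∀ r ∈ rs, r ∈ maximalIdeal Q) :
    PDLT Q (Q ⧸ Ideal.ofList rs) (rs.length + 1) := by
  have h1 := ModuleCat.projectiveDimension_quotient_eq_add_length_of_isWeaklyRegular
    (ModuleCat.of Q Q) rs hreg hm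
  have h2 : projectiveDimension (ModuleCat.of Q Q) ≤ (0 : ℕ) := by
    rw [projectiveDimension_le_iff]
    exact pd_one_iff.2 inferInstance
  have h3 : projectiveDimension (ModuleCat.of Q
      (Q ⧸ Ideal.ofList rs • (⊤ : Submodule Q Q))) ≤ (rs.length : ℕ) := by
    refine h1.le.trans ?_
    calc _ ≤ ((0 : ℕ) : WithBot ℕ∞) + (rs.length : ℕ) := by gcongr
      _ = _ := by simp
  rw [projectiveDimension_le_iff] at h3
  exact pd_of_equiv (Submodule.quotEquivOfEq _ _ (by simp)) h3

theorem embed_main (Q : Type u) [CommRing Q] [IsLocalRing Q] [IsNoetherianRing Q] (rs : List Q) :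
    IsWeaklyRegular Q rs → (∀ r ∈ rs, r ∈ maximalIdeal Q) →
    ∀ (R : Type u) [CommRing R] [Algebra Q R], Function.Surjective (algebraMap Q R) →
    RingHom.ker (algebraMap Q R) = Ideal.ofList rs → ∀ (𝒴 : Set (ModuleCat.{u} R)),
    SyzClass R 𝒴 → ∀ (W : Type u) [AddCommGroup W] [Module R W] [Module Q W] [IsScalarTower Q R W],
    ModuleCat.of R W ∈ 𝒴 → PDLT Q W (rs.length + 1) →
    ∃ (m : ℕ) (j : W →ₗ[R] (Fin m → R)), Function.Injective j ∧
      ModuleCat.of R ((Fin m → R) ⧸ LinearMap.range j) ∈ 𝒴 := by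
  induction rs using List.reverseRecOn with
  | nil =>
    intro _ _ R _ _ hsurj hker 𝒴 h𝒴 W _ _ _ _ hW hpd
    have := h𝒴.finite hW
    have hQR : Module.Finite Q R := Module.Finite.of_surjective (Algebra.linearMap Q R) hsurj
    have : Module.Finite Q W := Module.Finite.trans R W
    rw [List.length_nil, zero_add, pd_one_iff] at hpd
    have : Module.Free Q W := Module.free_of_flat_of_isLocalRing
    let b := Module.finBasis Q W
    let e0 : Q ≃ₗ[Q] R := LinearEquiv.ofBijective (Algebra.linearMap Q R)
      ⟨by
        refine (injective_iff_map_eq_zero _).2 fun q hq => ?_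
        have : q ∈ RingHom.ker (algebraMap Q R) := hq
        rw [hker] at this
        simpa using this, hsurj⟩
    let e : W ≃ₗ[Q] (Fin (Module.finrank Q W) → R) :=
      b.equivFun.trans (LinearEquiv.piCongrRight (fun _ => e0))
    refine ⟨_, e.toLinearMap.extendScalarsOfSurjective hsurj, e.injective, ?_⟩
    have htop : LinearMap.range (e.toLinearMap.extendScalarsOfSurjective hsurj) = ⊤ :=
      LinearMap.range_eq_top.2 e.surjective
    have : Subsingleton ((Fin (Module.finrank Q W) → R) ⧸
        LinearMap.range (e.toLinearMap.extendScalarsOfSurjective hsurj)) :=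
      by
        rw [htop]; infer_instance
    exact h𝒴.iso (0 : (Fin 0 → R) ≃ₗ[R] _) (h𝒴.free 0)
  | append_singleton rs f ih =>
    intro hreg hm R _ _ hsurj hker 𝒴 h𝒴 W _ _ _ _ hW hpd
    rw [isWeaklyRegular_append_iff] at hreg
    have hm' : ∀ r ∈ rs, r ∈ maximalIdeal Q := fun r hr => hm r (by simp [hr])
    let S := Q ⧸ Ideal.ofList rs
    have hle : ∀ a ∈ Ideal.ofList rs, algebraMap Q R a = 0 := by
      intro a ha
      rw [← RingHom.mem_ker, hker, Ideal.ofList_append]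
      exact Ideal.mem_sup_left ha
    let φ : S →+* R := Ideal.Quotient.lift (Ideal.ofList rs) (algebraMap Q R) hle
    let _ : Algebra S R := φ.toAlgebra
    have hφ : ∀ q : Q, algebraMap S R (algebraMap Q S q) = algebraMap Q R q := fun q => rfl
    have : IsScalarTower Q S R := IsScalarTower.of_algebraMap_eq (fun q => (hφ q).symm)
    let _ : Module S W := Module.compHom W (algebraMap S R)
    have hsm : ∀ (s : S) (w : W), s • w = algebraMap S R s • w := fun s w => rfl
    have : IsScalarTower S R W := ⟨fun s r w => by
      rw [hsm, Algebra.smul_def, mul_smul]⟩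
    have : IsScalarTower Q S W := ⟨fun q s w => by
      rw [hsm, hsm, Algebra.smul_def, map_mul, hφ, mul_smul, algebraMap_smul]⟩
    have hsurjS : Function.Surjective (algebraMap S R) := fun r => by
      obtain ⟨q, rfl⟩ := hsurj r
      exact ⟨algebraMap Q S q, hφ q⟩
    let x : S := algebraMap Q S f
    have hkerS : RingHom.ker (algebraMap S R) = Ideal.span {x} := by
      ext s
      obtain ⟨q, rfl⟩ := Ideal.Quotient.mk_surjective s
      have h1 : Ideal.Quotient.mk (Ideal.ofList rs) q ∈ RingHom.ker (algebraMap S R) ↔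
        q ∈ RingHom.ker (algebraMap Q R) := Iff.rfl
      rw [h1, hker, Ideal.ofList_append, Ideal.ofList_singleton]
      have h2 : Ideal.span {x} = (Ideal.span {f}).map (Ideal.Quotient.mk (Ideal.ofList rs)) := by
        rw [Ideal.map_span, Set.image_singleton]; rfl
      rw [h2, ← Ideal.mem_comap, Ideal.comap_map_of_surjective _ Ideal.Quotient.mk_surjective,
        ← RingHom.ker_eq_comap_bot, Ideal.mk_ker, sup_comm]
    have hx : IsSMulRegular S x := by
      have h1 := hreg.2
      rw [isWeaklyRegular_singleton_iff] at h1
      have h2 := (LinearEquiv.isSMulRegular_congr (Submodule.quotEquivOfEq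
        (Ideal.ofList rs • (⊤ : Submodule Q Q)) (Ideal.ofList rs) (by simp)) f).1 h1
      intro a b hab
      refine h2 (?_ : f • a = f • b)
      rw [← algebraMap_smul S f a, ← algebraMap_smul S f b]
      exact hab
    have hWfin := h𝒴.finite hW
    obtain ⟨n, g, hg⟩ := Module.Finite.exists_fin' R W
    let red : (Fin n → S) →ₗ[S] (Fin n → R) := (Algebra.linearMap S R).compLeft (Fin n)
    let p : (Fin n → S) →ₗ[S] W := g.restrictScalars S ∘ₗ red
    have hpf : ∀ s, p s = g (fun j => algebraMap S R (s j)) := fun s => rfl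
    have hp : Function.Surjective p := hg.comp (fun r => by
      choose s hs using fun j => hsurjS (r j)
      exact ⟨s, funext hs⟩)
    obtain ⟨i, q, hi, he, hq⟩ := change_rings_seq hsurjS x hkerS hx g hg p hpf
    have hΩ : ModuleCat.of R (LinearMap.ker g) ∈ 𝒴 :=
      h𝒴.syz (LinearMap.ker g).subtype g Subtype.val_injective
        (LinearMap.exact_subtype_ker_map g) hg hW
    have hV : ModuleCat.of R (R ⊗[S] LinearMap.ker p) ∈ 𝒴 := h𝒴.ext i q hi he hq hW hΩ
    have hV' : ModuleCat.of S (LinearMap.ker p) ∈ liftClass R x 𝒴 :=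
      ⟨inferInstanceAs (Module.Finite S (LinearMap.ker p)),
        (IsSMulRegular.pi (fun _ => hx) : IsSMulRegular (Fin n → S) x).submodule _ _, hV⟩
    have hpdV : PDLT Q (LinearMap.ker p) (rs.length + 1) := by
      refine pd_X1 ((LinearMap.ker p).subtype.restrictScalars Q) (p.restrictScalars Q)
        Subtype.val_injective (LinearMap.exact_subtype_ker_map p) hp _
        (pd_pow (pd_quot Q rs hreg.1 hm') n) ?_
      simpa using hpd
    obtain ⟨m, j, hj, hcok⟩ := ih hreg.1 hm' S Ideal.Quotient.mk_surjective (Ideal.mk_ker) _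
      (liftClass_syz hsurjS x hkerS hx h𝒴) (LinearMap.ker p) hV' hpdV
    obtain ⟨t1, t2, t3⟩ := ses_tensor (R := R) hsurjS x hkerS j (LinearMap.range j).mkQ hj
      (LinearMap.exact_map_mkQ_range j) (Submodule.mkQ_surjective _) hcok.2.1
    let e := TensorProduct.piScalarRight S R R (Fin m)
    refine ⟨m, (e.toLinearMap ∘ₗ j.baseChange R) ∘ₗ i, (e.injective.comp t1).comp hi, ?_⟩
    refine embed_comb h𝒴 i q he hq (e.toLinearMap ∘ₗ j.baseChange R)
      ((LinearMap.range j).mkQ.baseChange R ∘ₗ e.symm.toLinearMap) (e.injective.comp t1) ?_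
      (t3.comp e.symm.surjective) hΩ hcok.2.2
    intro y
    refine (t2 (e.symm y)).trans ?_
    constructor
    · rintro ⟨z, hz⟩
      exact ⟨z, by simp [hz]⟩
    · rintro ⟨z, hz⟩
      exact ⟨z, by simp [← hz]⟩

end PartC3


section PartD1
open TensorProduct IsBaseChange

variable {R : Type u} [CommRing R] (S : Type u) [CommRing S] [Algebra R S]

/-- comparison map for Hom and base change -/
noncomputable def tauHom (M N : Type u) [AddCommGroup M] [Module R M] [AddCommGroup N] [Module R N] :
    (S ⊗[R] (M →ₗ[R] N)) →ₗ[S] (M →ₗ[R] S ⊗[R] N) :=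
  IsBaseChange.linearMapRightBaseChangeHom S M (TensorProduct.mk R S N 1)

theorem tauHom_tmul {M N : Type u} [AddCommGroup M] [Module R M] [AddCommGroup N] [Module R N]
    (s : S) (f : M →ₗ[R] N) (m : M) : tauHom S M N (s ⊗ₜ f) m = s ⊗ₜ f m := by
  simp [tauHom, IsBaseChange.linearMapRightBaseChangeHom, TensorProduct.smul_tmul']

theorem tauHom_left {M M' N : Type u} [AddCommGroup M] [Module R M] [AddCommGroup M'] [Module R M']
    [AddCommGroup N] [Module R N] (g : M' →ₗ[R] M) (z : S ⊗[R] (M →ₗ[R] N)) :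
    tauHom S M' N ((LinearMap.lcomp R N g).lTensor S z) = tauHom S M N z ∘ₗ g := by
  induction z with
  | zero => simp
  | tmul s f => ext m; simp [tauHom_tmul]
  | add x y hx hy => simp [hx, hy, LinearMap.add_comp]

theorem tauHom_right {M N N' : Type u} [AddCommGroup M] [Module R M] [AddCommGroup N'] [Module R N']
    [AddCommGroup N] [Module R N] (g : N →ₗ[R] N') (z : S ⊗[R] (M →ₗ[R] N)) :
    tauHom S M N' ((LinearMap.compRight R g : (M →ₗ[R] N) →ₗ[R] _).lTensor S z) =
      g.lTensor S ∘ₗ tauHom S M N z := by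
  induction z with
  | zero => simp
  | tmul s f => ext m; simp [tauHom_tmul]
  | add x y hx hy => simp [hx, hy, LinearMap.comp_add]

theorem tauHom_free {M N : Type u} [AddCommGroup M] [Module R M] [AddCommGroup N] [Module R N]
    [Module.Finite R M] [Module.Free R M] : Function.Bijective (tauHom (R := R) S M N) :=
  (IsBaseChange.linearMapRightBaseChangeEquiv M (TensorProduct.isBaseChange R N S)).bijective

theorem tauHom_bij [IsNoetherianRing R] [Module.Flat R S] {M N : Type u} [AddCommGroup M]
    [Module R M] [AddCommGroup N] [Module R N] [Module.Finite R M] :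
    Function.Bijective (tauHom (R := R) S M N) := by
  obtain ⟨n, π, hπ⟩ := Module.Finite.exists_fin' R M
  obtain ⟨m, d0, hd0⟩ := Module.Finite.exists_fin' R (LinearMap.ker π)
  let d := (LinearMap.ker π).subtype ∘ₗ d0
  have hcan : ∀ {P : Type u} [AddCommGroup P] [Module R P] (a b : M →ₗ[R] P),
    a ∘ₗ π = b ∘ₗ π → a = b := fun a b h => by
      ext x; obtain ⟨y, rfl⟩ := hπ x; exact LinearMap.congr_fun h y
  have hd : ∀ x, π (d x) = 0 := fun x => (d0 x).2
  have hinj : Function.Injective (LinearMap.lcomp R N π) := fun a b h => hcan a b h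
  have hex : Function.Exact (LinearMap.lcomp R N π) (LinearMap.lcomp R N d) := by
    intro h
    constructor
    · intro h0
      have hk : LinearMap.ker π ≤ LinearMap.ker h := by
        intro x hx
        obtain ⟨y, hy⟩ := hd0 ⟨x, hx⟩
        have := LinearMap.congr_fun h0 y
        simpa [d, hy] using this
      obtain ⟨g, hg⟩ : ∃ g : M →ₗ[R] N, g ∘ₗ π = h := by
        refine ⟨(LinearMap.ker π).liftQ h hk ∘ₗ (π.quotKerEquivOfSurjective hπ).symm.toLinearMap, ?_⟩
        ext1 x
        ext
        simp only [LinearMap.comp_apply, LinearEquiv.coe_coe]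
        have : ((π.quotKerEquivOfSurjective hπ).symm) (π (LinearMap.single R (fun _ => R) x 1)) =
            (LinearMap.ker π).mkQ (LinearMap.single R (fun _ => R) x 1) := by
          rw [LinearEquiv.symm_apply_eq]; simp
        rw [this]; simp
      exact ⟨g, hg⟩
    · rintro ⟨g, rfl⟩
      ext x
      simp [hd]
  have hex' := Module.Flat.lTensor_exact S hex
  have hinj' := Module.Flat.lTensor_preserves_injective_linearMap (M := S) _ hinj
  constructor
  · intro z w hzw
    apply hinj'
    apply (tauHom_free (R := R) S).1
    rw [tauHom_left, tauHom_left, hzw]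
  · intro h
    obtain ⟨y, hy⟩ := (tauHom_free (R := R) S).2 (h ∘ₗ π)
    have : (LinearMap.lcomp R N d).lTensor S y = 0 := by
      apply (tauHom_free (R := R) S).1
      rw [tauHom_left, hy, map_zero, LinearMap.comp_assoc]
      have : π ∘ₗ d = 0 := LinearMap.ext hd
      rw [this, LinearMap.comp_zero]
    obtain ⟨z, rfl⟩ := (hex' y).1 this
    refine ⟨z, hcan _ _ ?_⟩
    rw [← hy, tauHom_left]

/-- extension of homs after base change -/
theorem extend_baseChange [IsNoetherianRing R] [Module.Flat R S] {A F K : Type u} [AddCommGroup A]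
    [Module R A] [AddCommGroup F] [Module R F] [AddCommGroup K] [Module R K] [Module.Finite R A]
    (i : A →ₗ[R] F) (h : ∀ g : A →ₗ[R] K, ∃ g' : F →ₗ[R] K, g' ∘ₗ i = g)
    (β : S ⊗[R] A →ₗ[S] S ⊗[R] K) : ∃ β' : S ⊗[R] F →ₗ[S] S ⊗[R] K, β' ∘ₗ i.baseChange S = β := by
  obtain ⟨z, hz⟩ := (tauHom_bij (R := R) S (M := A) (N := K)).2
    (β.restrictScalars R ∘ₗ TensorProduct.mk R S A 1)
  have hs : Function.Surjective (LinearMap.lcomp R K i) := fun g => h g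
  obtain ⟨y, rfl⟩ := LinearMap.lTensor_surjective S hs z
  refine ⟨(tauHom S F K y).liftBaseChange S, ?_⟩
  ext a
  rw [tauHom_left] at hz
  have := LinearMap.congr_fun hz a
  simpa using this

/-- descent of liftability -/
theorem lift_descent [IsNoetherianRing R] [Module.FaithfullyFlat R S] {W G K : Type u}
    [AddCommGroup W] [Module R W] [AddCommGroup G] [Module R G] [AddCommGroup K] [Module R K]
    [Module.Finite R W] (π : G →ₗ[R] K)
    (h : ∀ g : S ⊗[R] W →ₗ[S] S ⊗[R] K, ∃ g' : S ⊗[R] W →ₗ[S] S ⊗[R] G, π.baseChange S ∘ₗ g' = g)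
    (g : W →ₗ[R] K) : ∃ g' : W →ₗ[R] G, π ∘ₗ g' = g := by
  suffices hs : Function.Surjective (LinearMap.compRight R π : (W →ₗ[R] G) →ₗ[R] _) from hs g
  rw [← Module.FaithfullyFlat.lTensor_surjective_iff_surjective R S]
  intro z
  obtain ⟨g', hg'⟩ := h ((tauHom S W K z).liftBaseChange S)
  obtain ⟨y, hy⟩ := (tauHom_bij (R := R) S (M := W) (N := G)).2
    (g'.restrictScalars R ∘ₗ TensorProduct.mk R S W 1)
  refine ⟨y, (tauHom_bij (R := R) S).1 ?_⟩
  rw [tauHom_right, hy]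
  ext w
  have := LinearMap.congr_fun hg' (1 ⊗ₜ w)
  simp at this
  rw [← this]
  rfl

end PartD1


section PartD2
open TensorProduct CategoryTheory.Abelian

/-- the class of f.g. modules left Ext-orthogonal to `K` -/
def perpClass (S : Type u) [CommRing S] (K : Type u) [AddCommGroup K] [Module S K] :
    Set (ModuleCat.{u} S) :=
  {U | Module.Finite S U ∧ ∀ i : ℕ, ∀ x : Abelian.Ext U (ModuleCat.of S K) (i + 1), x = 0}

theorem ext_free_zero {S : Type u} [CommRing S] {F K : Type u} [AddCommGroup F] [Module S F]
    [AddCommGroup K] [Module S K] [Module.Projective S F] (i : ℕ)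
    (x : Abelian.Ext (ModuleCat.of S F) (ModuleCat.of S K) (i + 1)) : x = 0 := by
  have : Projective (ModuleCat.of S F) :=
    (IsProjective.iff_projective F).1 inferInstance
  exact Ext.eq_zero_of_projective x

theorem perpClass_syz (S : Type u) [CommRing S] [IsNoetherianRing S] (K : Type u) [AddCommGroup K]
    [Module S K] : SyzClass S (perpClass S K) where
  finite h := h.1
  free n := ⟨inferInstanceAs (Module.Finite S (Fin n → S)), fun i x => ext_free_zero i x⟩
  ext {A B C} _ _ _ _ _ _ i p hi he hp hA hC := by
    obtain ⟨h, hS⟩ := ses_shortExact i p hi he hp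
    have h1 : Module.Finite S A := hA.1
    have h2 : Module.Finite S C := hC.1
    refine ⟨Module.Finite.of_exact he hp, fun n x => ?_⟩
    obtain ⟨y, hy⟩ := Ext.contravariant_sequence_exact₂ hS _ x (hA.2 n _)
    rw [← hy, hC.2 n y, Ext.comp_zero]
  syz {A C} _ _ _ _ n i p hi he hp hC := by
    obtain ⟨h, hS⟩ := ses_shortExact i p hi he hp
    refine ⟨Module.Finite.of_injective i hi, fun n x => ?_⟩
    obtain ⟨y, hy⟩ := Ext.contravariant_sequence_exact₁ hS _ x (add_comm 1 _) (hC.2 (n + 1) _)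
    rw [← hy, ext_free_zero n y, Ext.comp_zero]

theorem ext_shift {S : Type u} [CommRing S] {A F C K : Type u} [AddCommGroup A] [Module S A]
    [AddCommGroup F] [Module S F] [AddCommGroup C] [Module S C] [AddCommGroup K] [Module S K]
    [Module.Projective S F]
    (i : A →ₗ[S] F) (p : F →ₗ[S] C) (hi : Function.Injective i) (he : Function.Exact i p)
    (hp : Function.Surjective p) (n : ℕ)
    (hA : ∀ x : Abelian.Ext (ModuleCat.of S A) (ModuleCat.of S K) (n + 1), x = 0)
    (x : Abelian.Ext (ModuleCat.of S C) (ModuleCat.of S K) (n + 1 + 1)) : x = 0 := by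
  obtain ⟨h, hS⟩ := ses_shortExact i p hi he hp
  obtain ⟨y, hy⟩ := Ext.contravariant_sequence_exact₃ hS _ x (ext_free_zero _ _) (add_comm 1 _)
  rw [← hy, hA y, Ext.comp_zero]

theorem ext_one {S : Type u} [CommRing S] {A F C K : Type u} [AddCommGroup A] [Module S A]
    [AddCommGroup F] [Module S F] [AddCommGroup C] [Module S C] [AddCommGroup K] [Module S K]
    [Module.Projective S F]
    (i : A →ₗ[S] F) (p : F →ₗ[S] C) (hi : Function.Injective i) (he : Function.Exact i p)
    (hp : Function.Surjective p)
    (hext : ∀ g : A →ₗ[S] K, ∃ g' : F →ₗ[S] K, g' ∘ₗ i = g)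
    (x : Abelian.Ext (ModuleCat.of S C) (ModuleCat.of S K) (0 + 1)) : x = 0 := by
  obtain ⟨h, hS⟩ := ses_shortExact i p hi he hp
  obtain ⟨y, hy⟩ := Ext.contravariant_sequence_exact₃ hS _ x (ext_free_zero _ _) (add_comm 1 _)
  obtain ⟨g, rfl⟩ := (Ext.mk₀_bijective _ _).2 y
  obtain ⟨g', hg'⟩ := hext g.hom
  have : g = ModuleCat.ofHom i ≫ ModuleCat.ofHom g' := by
    ext1; exact hg'.symm
  rw [← hy, this, ← Ext.mk₀_comp_mk₀]
  exact hS.extClass_comp_assoc _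

theorem ext_one_extend {S : Type u} [CommRing S] {A F C K : Type u} [AddCommGroup A] [Module S A]
    [AddCommGroup F] [Module S F] [AddCommGroup C] [Module S C] [AddCommGroup K] [Module S K]
    (i : A →ₗ[S] F) (p : F →ₗ[S] C) (hi : Function.Injective i) (he : Function.Exact i p)
    (hp : Function.Surjective p)
    (hC : ∀ x : Abelian.Ext (ModuleCat.of S C) (ModuleCat.of S K) (0 + 1), x = 0)
    (g : A →ₗ[S] K) : ∃ g' : F →ₗ[S] K, g' ∘ₗ i = g := by
  obtain ⟨h, hS⟩ := ses_shortExact i p hi he hp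
  obtain ⟨y, hy⟩ := Ext.contravariant_sequence_exact₁ hS _ (Ext.mk₀ (ModuleCat.ofHom g))
    (add_comm 1 0) (hC _)
  obtain ⟨g', rfl⟩ := (Ext.mk₀_bijective _ _).2 y
  refine ⟨g'.hom, ?_⟩
  rw [Ext.mk₀_comp_mk₀] at hy
  have := (Ext.mk₀_bijective _ _).1 hy
  exact congrArg ModuleCat.Hom.hom this

theorem perp_baseChange {R : Type u} [CommRing R] [IsNoetherianRing R] (S : Type u) [CommRing S]
    [Algebra R S] [Module.Flat R S] (𝒳 : Set (ModuleCat.{u} R)) (h𝒳 : IsResolving R 𝒳)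
    (K : Type u) [AddCommGroup K] [Module R K]
    (hK : ∀ (A F W : ModuleCat.{u} R) (i : A →ₗ[R] F) (p : F →ₗ[R] W), IsSES R i p → W ∈ 𝒳 →
      ∀ g : A →ₗ[R] K, ∃ g' : F →ₗ[R] K, g' ∘ₗ i = g) (n : ℕ) :
    ∀ W ∈ 𝒳, ∀ x : Abelian.Ext (ModuleCat.of S (S ⊗[R] W)) (ModuleCat.of S (S ⊗[R] K)) (n + 1),
      x = 0 := by
  induction n with
  | zero =>
    intro W hW
    have := h𝒳.finite W hW
    obtain ⟨n, π, hπ⟩ := Module.Finite.exists_fin' R W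
    have he := LinearMap.exact_subtype_ker_map π
    exact ext_one ((LinearMap.ker π).subtype.baseChange S) (π.baseChange S)
      (Module.Flat.lTensor_preserves_injective_linearMap (M := S) _ Subtype.val_injective)
      (lTensor_exact S he hπ) (LinearMap.lTensor_surjective S hπ)
      (extend_baseChange S _ (hK (ModuleCat.of R (LinearMap.ker π)) (ModuleCat.of R (Fin n → R)) W
        _ π ⟨Subtype.val_injective, he, hπ⟩ hW))
  | succ k ih =>
    intro W hW
    have := h𝒳.finite W hW
    obtain ⟨n, π, hπ⟩ := Module.Finite.exists_fin' R W
    have he := LinearMap.exact_subtype_ker_map π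
    have hA : ModuleCat.of R (LinearMap.ker π) ∈ 𝒳 :=
      h𝒳.kerClosed _ (ModuleCat.of R (Fin n → R)) W (LinearMap.ker π).subtype π
        ⟨Subtype.val_injective, he, hπ⟩
        (h𝒳.freeMem _ (inferInstanceAs (Module.Finite R (Fin n → R)))
          (inferInstanceAs (Module.Free R (Fin n → R)))) hW
    exact ext_shift ((LinearMap.ker π).subtype.baseChange S) (π.baseChange S)
      (Module.Flat.lTensor_preserves_injective_linearMap (M := S) _ Subtype.val_injective)
      (lTensor_exact S he hπ) (LinearMap.lTensor_surjective S hπ) k (ih _ hA)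

/-- descent step, given that base changes of members of `𝒳` embed well into free modules -/
theorem final_step {R : Type u} [CommRing R] [IsNoetherianRing R] (S : Type u) [CommRing S]
    [Algebra R S] [Module.FaithfullyFlat R S] [IsNoetherianRing S]
    (𝒳 : Set (ModuleCat.{u} R)) (h𝒳 : IsResolving R 𝒳)
    (K : Type u) [AddCommGroup K] [Module R K]
    (hK : ∀ (A F W : ModuleCat.{u} R) (i : A →ₗ[R] F) (p : F →ₗ[R] W), IsSES R i p → W ∈ 𝒳 →
      ∀ g : A →ₗ[R] K, ∃ g' : F →ₗ[R] K, g' ∘ₗ i = g)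
    (W : ModuleCat.{u} R) (hW : W ∈ 𝒳)
    (hemb : ∀ (𝒴 : Set (ModuleCat.{u} S)), SyzClass S 𝒴 → ModuleCat.of S (S ⊗[R] W) ∈ 𝒴 →
      ∃ (m : ℕ) (j : S ⊗[R] W →ₗ[S] (Fin m → S)), Function.Injective j ∧
        ModuleCat.of S ((Fin m → S) ⧸ LinearMap.range j) ∈ 𝒴)
    {G : Type u} [AddCommGroup G] [Module R G] (π : G →ₗ[R] K) (hπ : Function.Surjective π)
    (g : W →ₗ[R] K) : ∃ g' : W →ₗ[R] G, π ∘ₗ g' = g := by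
  have := h𝒳.finite W hW
  refine lift_descent S π (fun g => ?_) g
  obtain ⟨m, j, hj, hc⟩ := hemb (perpClass S (S ⊗[R] K)) (perpClass_syz S _)
    ⟨inferInstanceAs (Module.Finite S (S ⊗[R] W)), fun n => perp_baseChange S 𝒳 h𝒳 K hK n W hW⟩
  obtain ⟨g1, hg1⟩ := ext_one_extend j (LinearMap.range j).mkQ hj (LinearMap.exact_map_mkQ_range j)
    (Submodule.mkQ_surjective _) (hc.2 0) g
  obtain ⟨g2, hg2⟩ := Module.projective_lifting_property (π.baseChange S) g1
    (LinearMap.lTensor_surjective S hπ)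
  exact ⟨g2 ∘ₗ j, by rw [← LinearMap.comp_assoc, hg2, hg1]⟩

end PartD2


section PartE1

theorem ext_new_of_old {R : Type u} [CommRing R] (X Y : ModuleCat.{u} R) (n : ℕ)
    (h : ExtVanish R n X Y) : Subsingleton (Abelian.Ext X Y n) := by
  let P := projectiveResolution X
  have h0 : Limits.IsZero (ExtMod R n X Y) := by
    have : Subsingleton (ExtMod R n X Y) := h
    exact ModuleCat.isZero_of_subsingleton _
  have h1 : Limits.IsZero ((P.complex.linearYonedaObj R Y).homology n) :=
    h0.of_iso (P.isoExt n Y).symm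
  rw [← HomologicalComplex.exactAt_iff_isZero_homology] at h1
  refine subsingleton_of_forall_eq 0 fun α => ?_
  obtain ⟨f, hf, rfl⟩ := P.extMk_surjective α (n + 1) rfl
  cases n with
  | zero =>
    rw [HomologicalComplex.exactAt_iff' _ 0 0 1 (by simp) (by simp),
      ShortComplex.moduleCat_exact_iff] at h1
    obtain ⟨g, hg⟩ := h1 f hf
    have hf0 : f = 0 := by
      rw [← hg]
      have : (P.complex.linearYonedaObj R Y).d 0 0 = 0 :=
        HomologicalComplex.shape _ _ _ (by simp)
      change (P.complex.linearYonedaObj R Y).d 0 0 g = 0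
      rw [this]; rfl
    subst hf0
    exact P.extMk_zero _ _
  | succ k =>
    rw [HomologicalComplex.exactAt_iff' _ k (k+1) (k+1+1) (by simp) (by simp),
      ShortComplex.moduleCat_exact_iff] at h1
    obtain ⟨g, hg⟩ := h1 f hf
    exact (P.extMk_eq_zero_iff _ _ _ _ k rfl).2 ⟨g, hg⟩

theorem exists_regular_of_mcm {R : Type u} [CommRing R] [IsNoetherianRing R] [IsLocalRing R]
    (W : ModuleCat.{u} R) [Module.Finite R W] [Nontrivial W] (hW : IsMCM R W) (d : ℕ)
    (hd : (d : WithBot ℕ∞) ≤ ringKrullDim R) :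
    ∃ rs : List R, rs.length = d ∧ (∀ r ∈ rs, r ∈ maximalIdeal R) ∧
      RingTheory.Sequence.IsRegular W rs := by
  have hd' : (d : ℕ∞) ≤ moduleDepth R W := by
    have := hd.trans hW
    exact_mod_cast this
  have : Module.Finite R (ModuleCat.of R (ResidueField R)) :=
    inferInstanceAs (Module.Finite R (R ⧸ maximalIdeal R))
  refine ModuleCat.exists_isRegular_of_exists_subsingleton_ext (maximalIdeal R) d W ?_
    (ModuleCat.of R (ResidueField R)) ?_ ?_
  · rw [lt_top_iff_ne_top]
    intro h
    have := Submodule.eq_bot_of_le_smul_of_le_jacobson_bot (maximalIdeal R) (⊤ : Submodule R W)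
      Module.Finite.fg_top h.ge (IsLocalRing.maximalIdeal_le_jacobson _)
    exact top_ne_bot this
  · have h := Module.support_eq_zeroLocus (R := R) (M := R ⧸ maximalIdeal R)
    rw [Ideal.annihilator_quotient] at h
    exact h
  · intro i hi
    refine ext_new_of_old _ _ _ ?_
    by_contra hne
    have : moduleDepth R W ≤ i := sInf_le ⟨i, hne, rfl⟩
    have := hd'.trans this
    norm_cast at this
    omega

end PartE1


section PartE2
open TensorProduct RingTheory.Sequence

theorem dim_ineq {R Q S : Type u} [CommRing R] [IsNoetherianRing R] [IsLocalRing R]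
    [CommRing Q] [IsNoetherianRing Q] [IsLocalRing Q] [CommRing S] [Algebra R S] [Algebra Q S]
    [IsLocalHom (algebraMap R S)]
    (fs : List Q) (hfs : ∀ f ∈ fs, f ∈ maximalIdeal Q) (hsurj : Function.Surjective (algebraMap Q S))
    (hker : RingHom.ker (algebraMap Q S) = Ideal.ofList fs)
    (hmap : maximalIdeal Q ≤ ((maximalIdeal R).map (algebraMap R S)).comap (algebraMap Q S))
    (d : ℕ) (hd : ringKrullDim R = d) : ringKrullDim Q ≤ ((d + fs.length : ℕ) : WithBot ℕ∞) := by
  classical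
  obtain ⟨s, hs, hcard⟩ := Ideal.exists_finset_card_eq_height_of_isNoetherianRing (maximalIdeal R)
  rw [← maximalIdeal_height_eq_ringKrullDim] at hd ⊢
  rw [← hcard] at hd
  have hd : s.card = d := by exact_mod_cast hd
  choose l hl using hsurj
  let t : Finset Q := s.image (fun r => l (algebraMap R S r)) ∪ fs.toFinset
  have hmin : maximalIdeal Q ∈ (Ideal.span (t : Set Q)).minimalPrimes := by
    refine ⟨⟨inferInstance, ?_⟩, ?_⟩
    · rw [Ideal.span_le]
      intro x hx
      simp only [t, Finset.coe_union, Finset.coe_image, Set.mem_union, Set.mem_image,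
        Finset.mem_coe, List.mem_toFinset] at hx
      rcases hx with ⟨r, hr, rfl⟩ | hx
      · have hr' : r ∈ maximalIdeal R := hs.1.2 (Ideal.subset_span hr)
        change _ ∈ maximalIdeal Q
        rw [mem_maximalIdeal, mem_nonunits_iff] at hr' ⊢
        intro hu
        have := hu.map (algebraMap Q S)
        rw [hl] at this
        exact hr' (isUnit_of_map_unit _ _ this)
      · exact hfs x hx
    · rintro P ⟨hP, hPt⟩ -
      have hkP : RingHom.ker (algebraMap Q S) ≤ P := by
        rw [hker]
        refine Ideal.span_le.2 fun x hx => hPt (Ideal.subset_span ?_)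
        have : x ∈ fs := hx
        simp [t, this]
      have hls : Function.Surjective (algebraMap Q S) := fun y => ⟨l y, hl y⟩
      have hP' : (P.map (algebraMap Q S)).IsPrime := Ideal.map_isPrime_of_surjective hls hkP
      have hcm : (P.map (algebraMap Q S)).comap (algebraMap Q S) = P := by
        rw [Ideal.comap_map_of_surjective _ hls, ← RingHom.ker_eq_comap_bot, sup_eq_left]
        exact hkP
      have hle : maximalIdeal R ≤ (P.map (algebraMap Q S)).comap (algebraMap R S) := by
        refine hs.2 ⟨inferInstance, ?_⟩ (le_maximalIdeal (Ideal.IsPrime.ne_top inferInstance))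
        rw [Ideal.span_le]
        intro r hr
        have : l (algebraMap R S r) ∈ P := hPt (Ideal.subset_span (by
          simp only [t, Finset.coe_union, Finset.coe_image]
          exact Or.inl ⟨r, hr, rfl⟩))
        have := Ideal.mem_map_of_mem (algebraMap Q S) this
        rw [hl] at this
        exact this
      rw [← Ideal.map_le_iff_le_comap] at hle
      exact hmap.trans ((Ideal.comap_mono hle).trans hcm.le)
  have h1 := Ideal.height_le_card_of_mem_minimalPrimes_span_finset hmin
  have h2 : t.card ≤ d + fs.length := by
    refine (Finset.card_union_le _ _).trans ?_
    gcongr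
    · exact Finset.card_image_le.trans hd.le
    · exact fs.toFinset_card_le
  have h3 : (maximalIdeal Q).height ≤ ((d + fs.length : ℕ) : ℕ∞) := h1.trans (by exact_mod_cast h2)
  exact_mod_cast h3

theorem pd_bound {R Q S : Type u} [CommRing R] [IsNoetherianRing R] [IsLocalRing R]
    [CommRing Q] [IsNoetherianRing Q] [IsLocalRing Q] [CommRing S] [Algebra R S] [Algebra Q S]
    [IsLocalHom (algebraMap R S)] [Module.Flat R S] (hQ : IsRegularLocal Q)
    (fs : List Q) (hfs : ∀ f ∈ fs, f ∈ maximalIdeal Q) (hsurj : Function.Surjective (algebraMap Q S))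
    (hker : RingHom.ker (algebraMap Q S) = Ideal.ofList fs)
    (hmap : maximalIdeal Q ≤ ((maximalIdeal R).map (algebraMap R S)).comap (algebraMap Q S))
    (W : ModuleCat.{u} R) [Module.Finite R W] (hW : IsMCM R W)
    (V : Type u) [AddCommGroup V] [Module R V] [Module S V] [Module Q V] [IsScalarTower R S V]
    [IsScalarTower Q S V] (b : W →ₗ[R] V) (hb : IsBaseChange S b) :
    PDLT Q V (fs.length + 1) := by
  have hSV : Module.Finite S V := Module.Finite.of_surjective hb.equiv.toLinearMap hb.equiv.surjective
  have hQS : Module.Finite Q S := Module.Finite.of_surjective (Algebra.linearMap Q S) hsurj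
  have hQV : Module.Finite Q V := Module.Finite.trans S V
  rcases subsingleton_or_nontrivial V with hsub | hnt
  · have h1 : PDLT Q V 1 := pd_one_iff.2 inferInstance
    exact hasProjectiveDimensionLT_of_ge _ 1 _ (by omega)
  · have hntV : Nontrivial (ModuleCat.of Q V) := hnt
    have hntW : Nontrivial W := by
      by_contra hW0
      rw [not_nontrivial_iff_subsingleton] at hW0
      have : Subsingleton V := hb.equiv.symm.toEquiv.subsingleton
      exact not_subsingleton V this
    obtain ⟨d, hd⟩ : ∃ d : ℕ, ringKrullDim R = d := by
      rw [← maximalIdeal_height_eq_ringKrullDim]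
      obtain ⟨s, hs, hcard⟩ :=
        Ideal.exists_finset_card_eq_height_of_isNoetherianRing (maximalIdeal R)
      exact ⟨s.card, by rw [← hcard]; rfl⟩
    obtain ⟨rs, hlen, hmem, hreg⟩ := exists_regular_of_mcm W hW d hd.ge
    have hw := hreg.1.of_flat_of_isBaseChange hb
    choose l hl using hsurj
    let zs : List Q := rs.map (fun r => l (algebraMap R S r))
    have hzs : zs.map (algebraMap Q S) = rs.map (algebraMap R S) := by
      simp [zs, hl]
    rw [← hzs, isWeaklyRegular_map_algebraMap_iff] at hw
    have hzm : ∀ z ∈ zs, z ∈ maximalIdeal Q := by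
      intro z hz
      obtain ⟨r, hr, rfl⟩ := List.mem_map.1 hz
      have hr' := hmem r hr
      rw [mem_maximalIdeal, mem_nonunits_iff] at hr' ⊢
      intro hu
      have := hu.map (algebraMap Q S)
      rw [hl] at this
      exact hr' (isUnit_of_map_unit _ _ this)
    have h1 := ModuleCat.projectiveDimension_quotient_eq_add_length_of_isWeaklyRegular
      (ModuleCat.of Q V) zs hw hzm
    set n := Module.finrank (ResidueField Q) (CotangentSpace Q) with hn
    have hspan : (maximalIdeal Q).spanFinrank ≤ n := by
      rw [spanFinrank_maximalIdeal_eq_finrank_cotangentSpace]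
    have h2 := (regular_domain_gldim n Q hspan hQ.2.ge).2
      (V ⧸ Ideal.ofList zs • (⊤ : Submodule Q V))
    have h3 : projectiveDimension (ModuleCat.of Q (V ⧸ Ideal.ofList zs • (⊤ : Submodule Q V))) ≤
      (n : ℕ) := by rw [projectiveDimension_le_iff]; exact h2
    have h4 := dim_ineq fs hfs (fun y => ⟨l y, hl y⟩) hker hmap d hd
    rw [hQ.2, ← hn] at h4
    have h4 : n ≤ d + fs.length := by exact_mod_cast h4
    have h5 : projectiveDimension (ModuleCat.of Q V) + (d : ℕ) ≤ ((d + fs.length : ℕ) : WithBot ℕ∞) := by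
      have : zs.length = d := by simp [zs, hlen]
      rw [← this]
      refine (h1.symm.le.trans h3).trans ?_
      rw [this]
      exact_mod_cast h4
    refine (projectiveDimension_le_iff _ _).1 ?_
    generalize projectiveDimension (ModuleCat.of Q V) = a at h5 ⊢
    induction a using WithBot.recBotCoe with
    | bot => exact bot_le
    | coe a =>
      induction a using ENat.recTopCoe with
      | top =>
        exfalso
        have h6 : ((⊤ + (d : ℕ) : ℕ∞) : WithBot ℕ∞) ≤ ((d + fs.length : ℕ) : ℕ∞) := by exact_mod_cast h5
        rw [WithBot.coe_le_coe, top_add, top_le_iff] at h6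
        exact ENat.natCast_ne_top _ h6
      | coe a =>
        have : a + d ≤ d + fs.length := by exact_mod_cast h5
        have : a ≤ fs.length := by omega
        exact_mod_cast this

end PartE2


theorem embed_pd {R Q S : Type u} [CommRing R] [IsNoetherianRing R] [IsLocalRing R]
    [CommRing Q] [IsNoetherianRing Q] [IsLocalRing Q] [CommRing S] [Algebra R S] [Algebra Q S]
    [IsLocalHom (algebraMap R S)] [Module.Flat R S] (hQ : IsRegularLocal Q)
    (fs : List Q) (hreg : RingTheory.Sequence.IsWeaklyRegular Q fs)
    (hfs : ∀ f ∈ fs, f ∈ maximalIdeal Q) (hsurj : Function.Surjective (algebraMap Q S))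
    (hker : RingHom.ker (algebraMap Q S) = Ideal.ofList fs)
    (hmap : maximalIdeal Q ≤ ((maximalIdeal R).map (algebraMap R S)).comap (algebraMap Q S))
    (W : ModuleCat.{u} R) [Module.Finite R W] (hW : IsMCM R W)
    (𝒴 : Set (ModuleCat.{u} S)) (h𝒴 : SyzClass S 𝒴)
    (V : Type u) [AddCommGroup V] [Module R V] [Module S V] [IsScalarTower R S V]
    (b : W →ₗ[R] V) (hb : IsBaseChange S b) (hmem : ModuleCat.of S V ∈ 𝒴) :
    ∃ (m : ℕ) (j : V →ₗ[S] (Fin m → S)), Function.Injective j ∧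
      ModuleCat.of S ((Fin m → S) ⧸ LinearMap.range j) ∈ 𝒴 := by
  let _ : Module Q V := Module.compHom V (algebraMap Q S)
  have : IsScalarTower Q S V := ⟨fun q s v => by
    rw [Algebra.smul_def, mul_smul]; rfl⟩
  exact embed_main Q fs hreg hfs S hsurj hker 𝒴 h𝒴 V hmem
    (pd_bound (R := R) hQ fs hfs hsurj hker hmap W hW V b hb)

theorem main_abs {R Q S : Type u} [CommRing R] [IsNoetherianRing R] [IsLocalRing R]
    [HenselianLocalRing R] [CommRing Q] [IsNoetherianRing Q] [IsLocalRing Q] [CommRing S]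
    [IsNoetherianRing S] [Algebra R S] [Algebra Q S]
    [IsLocalHom (algebraMap R S)] [Module.FaithfullyFlat R S] (hQ : IsRegularLocal Q)
    (fs : List Q) (hreg : RingTheory.Sequence.IsWeaklyRegular Q fs)
    (hfs : ∀ f ∈ fs, f ∈ maximalIdeal Q) (hsurj : Function.Surjective (algebraMap Q S))
    (hker : RingHom.ker (algebraMap Q S) = Ideal.ofList fs)
    (hmap : maximalIdeal Q ≤ ((maximalIdeal R).map (algebraMap R S)).comap (algebraMap Q S))
    (𝒳 : Set (ModuleCat.{u} R)) (h𝒳 : IsResolving R 𝒳) (hMCM : ∀ M ∈ 𝒳, IsMCM R M)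
    (M : ModuleCat.{u} R) (h : HasRightApprox R 𝒳 M) :
    MemCC R 𝒳 M := by
  obtain ⟨X, f, hf, hmin⟩ := exists_min_approx R 𝒳 h𝒳 M h
  have hXf : Module.Finite R X := h𝒳.finite X hf.1
  obtain ⟨m, π, hπ⟩ := Module.Finite.exists_fin' R (LinearMap.ker f)
  refine ⟨X, ModuleCat.of R (Fin m → R), (LinearMap.ker f).subtype ∘ₗ π, f, hf.1,
    h𝒳.freeMem _ (inferInstanceAs (Module.Finite R (Fin m → R)))
      (inferInstanceAs (Module.Free R (Fin m → R))), fun W hW => ⟨hf.2 W hW, fun g => ⟨?_, ?_⟩⟩⟩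
  · intro hg
    have hWf := h𝒳.finite W hW
    let g0 : W →ₗ[R] LinearMap.ker f := g.codRestrict _ (fun x => LinearMap.congr_fun hg x)
    obtain ⟨g1, hg1⟩ := final_step S 𝒳 h𝒳 (LinearMap.ker f)
      (fun A F W i p hs hW g => wakamatsu R 𝒳 h𝒳 M X f hf hmin A F W i p hs hW g) W hW
      (fun 𝒴 h𝒴 hmem => by
        exact embed_pd (R := R) hQ fs hreg hfs hsurj hker hmap W (hMCM W hW) 𝒴 h𝒴
          (TensorProduct R S W) _ (TensorProduct.isBaseChange R W S) hmem) π hπ g0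
    refine ⟨g1, ?_⟩
    change ((LinearMap.ker f).subtype ∘ₗ π) ∘ₗ g1 = g
    rw [LinearMap.comp_assoc, hg1]
    rfl
  · rintro ⟨y, rfl⟩
    ext x
    exact (π (y x)).2

/-- Over a henselian local complete intersection, let `𝒳` be a resolving
subcategory consisting of maximal Cohen–Macaulay modules. If a finitely generated module
`M` admits a right `𝒳`-approximation (i.e. `Hom_R(-, M)|_𝒳` is finitely generated), then
`M ∈ 𝒞(𝒳)` (i.e. `Hom_R(-, M)|_𝒳` is finitely presented); in other words, `𝒳` is
coherent. -/
theorem stmt18 (R : Type u) [CommRing R] [IsNoetherianRing R] [IsLocalRing R]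
    [HenselianLocalRing R] (hci : IsCompleteIntersection R)
    (𝒳 : Set (ModuleCat.{u} R)) (h𝒳 : IsResolving R 𝒳) (hMCM : ∀ M ∈ 𝒳, IsMCM R M)
    (M : ModuleCat.{u} R) (hMfg : Module.Finite R M) (h : HasRightApprox R 𝒳 M) :
    MemCC R 𝒳 M := by
  obtain ⟨w⟩ := hci
  let Q := w.Q
  let _ : CommRing Q := w.commRing
  let _ : IsLocalRing Q := w.localRing
  have hQ : IsRegularLocal Q := w.regular
  have : IsNoetherianRing Q := hQ.1
  let S := AdicCompletion (maximalIdeal R) R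
  let φ : Q →+* S := w.equiv.symm.toRingHom.comp (Ideal.Quotient.mk (Ideal.span {x : Q | x ∈ w.fs}))
  let _ : Algebra Q S := φ.toAlgebra
  have hsurj : Function.Surjective (algebraMap Q S) :=
    w.equiv.symm.surjective.comp Ideal.Quotient.mk_surjective
  have hker : RingHom.ker (algebraMap Q S) = Ideal.ofList w.fs := by
    ext x
    change w.equiv.symm (Ideal.Quotient.mk _ x) = 0 ↔ _
    rw [map_eq_zero_iff _ w.equiv.symm.injective, Ideal.Quotient.eq_zero_iff_mem]
  have : IsNoetherianRing S := isNoetherianRing_of_surjective Q S (algebraMap Q S) hsurj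
  have : Module.Flat R S := AdicCompletion.flat_of_isNoetherian _
  have : Module.FaithfullyFlat R S := Module.FaithfullyFlat.of_flat_of_isLocalHom
  have hfs : ∀ f ∈ w.fs, f ∈ maximalIdeal Q := by
    have hne : Ideal.ofList w.fs ≠ ⊤ := by
      intro htop
      exact w.regSeq.2 (by rw [htop]; simp)
    intro f hf
    exact le_maximalIdeal hne (Ideal.subset_span hf)
  have hmap : maximalIdeal Q ≤ ((maximalIdeal R).map (algebraMap R S)).comap (algebraMap Q S) := by
    rw [← AdicCompletion.maximalIdeal_eq_map]
    have := Ideal.comap_isMaximal_of_surjective (algebraMap Q S) hsurj (K := maximalIdeal S)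
    exact (eq_maximalIdeal this).ge
  exact main_abs (S := S) hQ w.fs w.regSeq.1 hfs hsurj hker hmap 𝒳 h𝒳 hMCM M h
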